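/- (Equation (ymer3).) As n → ∞, the variance of the final greedy score satisfies Var(S_n^gr)/n → 4 − (27 − 6√3)/(4π). -/

import Mathlib

open MeasureTheory ProbabilityTheory Real Filter
open scoped ENNReal Topology

namespace RPSGreedy

/-- Standard basis vector `e i` of `Fin 3 → ℕ`. -/
def e (i : Fin 3) : Fin 3 → ℕ := fun j => if j = i then 1 else 0

/-- One-step transition probabilities of the greedy game process. -/
noncomputable def stepProb (n : ℕ) (p q : (Fin 3 → ℕ) × ℤ) : ℝ≥0∞ :=
  let k := (Finset.univ.filter fun i => p.1 i = n).card
  if k = 0 then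
    (if (∃ i : Fin 3, q.1 = p.1 + e i) ∧ (q.2 = p.2 - 1 ∨ q.2 = p.2 ∨ q.2 = p.2 + 1)
      then 1/9 else 0)
  else if k = 1 then
    ∑ c : Fin 3, (if p.1 c = n then
      (if q.1 = p.1 + e (c+1) ∧ q.2 = p.2 + 1 then 2/9
       else if q.1 = p.1 + e (c+1) ∧ q.2 = p.2 - 1 then 1/9
       else if q.1 = p.1 + e (c+2) ∧ q.2 = p.2 then 4/9
       else if q.1 = p.1 + e (c+2) ∧ q.2 = p.2 + 1 then 2/9
       else 0)
      else 0)
  else if k = 2 then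
    (if ∃ i : Fin 3, p.1 i < n ∧ q.1 = p.1 + e i ∧ q.2 = p.2 + 1 then 1 else 0)
  else 0

/-- The greedy game process over `3n` rounds: initial state and Markov transitions. -/
def IsGreedyProcess (n : ℕ) {Ω : Type*} [MeasurableSpace Ω] (μ : Measure Ω)
    (NS : ℕ → Ω → (Fin 3 → ℕ) × ℤ) : Prop :=
  IsProbabilityMeasure μ ∧
  (∀ t, Measurable (NS t)) ∧
  μ {ω | NS 0 ω = (fun _ => 0, 0)} = 1 ∧
  (∀ t, t < 3 * n → ∀ f : ℕ → (Fin 3 → ℕ) × ℤ,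
    μ {ω | ∀ u ≤ t + 1, NS u ω = f u}
      = stepProb n (f t) (f (t + 1)) * μ {ω | ∀ u ≤ t, NS u ω = f u})


/-- Score increment attached to an index. -/
def dl (d : Fin 3) : ℤ := (d : ℤ) - 1

/-- Real-valued branch probabilities. -/
noncomputable def pr (n : ℕ) (N : Fin 3 → ℕ) (i d : Fin 3) : ℝ :=
  let k := (Finset.univ.filter fun i => N i = n).card
  if k = 0 then 1/9
  else if k = 1 then
    ∑ c : Fin 3, (if N c = n then
      (if i = c+1 ∧ d = 2 then 2/9
       else if i = c+1 ∧ d = 0 then 1/9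
       else if i = c+2 ∧ d = 1 then 4/9
       else if i = c+2 ∧ d = 2 then 2/9
       else 0)
      else 0)
  else if k = 2 then (if N i < n ∧ d = 2 then 1 else 0)
  else 0

lemma pr_nonneg (n : ℕ) (N : Fin 3 → ℕ) (i d : Fin 3) : 0 ≤ pr n N i d := by
  unfold pr
  dsimp only
  split_ifs
  · norm_num
  · apply Finset.sum_nonneg
    intro c _
    split_ifs <;> norm_num
  · norm_num
  · norm_num
  · norm_num

lemma e_inj {i j : Fin 3} (h : e i = e j) : i = j := by
  have := congrFun h i
  simp only [e] at this
  by_contra hne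
  simp [hne] at this

lemma dl_inj {i j : Fin 3} (h : dl i = dl j) : i = j := by
  unfold dl at h
  apply Fin.ext
  omega

lemma q_iff (N : Fin 3 → ℕ) (s : ℤ) (i d j f : Fin 3) :
    (((N + e i, s + dl d) : (Fin 3 → ℕ) × ℤ) = (N + e j, s + dl f)) ↔ (i = j ∧ d = f) := by
  constructor
  · intro h
    rw [Prod.mk.injEq] at h
    exact ⟨e_inj (add_left_cancel h.1), dl_inj (add_left_cancel h.2)⟩
  · rintro ⟨rfl, rfl⟩; rfl

lemma stepProb_hit (n : ℕ) (N : Fin 3 → ℕ) (s : ℤ) (i d : Fin 3) :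
    stepProb n (N, s) (N + e i, s + dl d) = ENNReal.ofReal (pr n N i d) := by
  have h9 : ENNReal.ofReal (1/9) = 1/9 := by
    rw [ENNReal.ofReal_div_of_pos (by norm_num)]; norm_num
  have h29 : ENNReal.ofReal (2/9) = 2/9 := by
    rw [ENNReal.ofReal_div_of_pos (by norm_num)]; norm_num
  have h49 : ENNReal.ofReal (4/9) = 4/9 := by
    rw [ENNReal.ofReal_div_of_pos (by norm_num)]; norm_num
  have hs1 : (s + dl d = s + 1) ↔ d = 2 := by unfold dl; omega
  have hs2 : (s + dl d = s - 1) ↔ d = 0 := by unfold dl; omega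
  have hs3 : (s + dl d = s) ↔ d = 1 := by unfold dl; omega
  have he : ∀ j, (N + e i = N + e j) ↔ i = j := fun j =>
    ⟨fun h => e_inj (add_left_cancel h), fun h => by rw [h]⟩
  unfold stepProb pr
  simp only [hs1, hs2, hs3, he]
  split_ifs with h1 h2 h3 h4 h5
  · exact h9.symm
  · exfalso; apply h2
    refine ⟨⟨i, rfl⟩, ?_⟩
    omega
  · rw [ENNReal.ofReal_sum_of_nonneg]
    · apply Finset.sum_congr rfl
      intro c _
      split_ifs <;> simp [h9, h29, h49]
    · intro c _
      split_ifs <;> norm_num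
  · simp
  · exfalso; grind
  · exfalso; grind
  · simp
  · simp

lemma stepProb_miss (n : ℕ) (p q : (Fin 3 → ℕ) × ℤ)
    (h : ∀ i d, q ≠ (p.1 + e i, p.2 + dl d)) : stepProb n p q = 0 := by
  have h0 : ∀ i, ¬ (q.1 = p.1 + e i ∧ q.2 = p.2 - 1) := fun i hi => h i 0 (by
    ext1; exact hi.1; simp [dl, hi.2]; ring)
  have h1 : ∀ i, ¬ (q.1 = p.1 + e i ∧ q.2 = p.2) := fun i hi => h i 1 (by
    ext1; exact hi.1; simp [dl, hi.2])
  have h2 : ∀ i, ¬ (q.1 = p.1 + e i ∧ q.2 = p.2 + 1) := fun i hi => h i 2 (by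
    ext1; exact hi.1; simp [dl, hi.2])
  unfold stepProb
  simp only [h0, h1, h2]
  split_ifs with a b c d f
  · exfalso
    obtain ⟨⟨i, hi⟩, hd⟩ := b
    rcases hd with hd | hd | hd
    · exact h0 i ⟨hi, hd⟩
    · exact h1 i ⟨hi, hd⟩
    · exact h2 i ⟨hi, hd⟩
  all_goals simp_all

lemma stepProb_eq (n : ℕ) (p q : (Fin 3 → ℕ) × ℤ) :
    stepProb n p q = ∑ i, ∑ d, if q = (p.1 + e i, p.2 + dl d) then
      ENNReal.ofReal (pr n p.1 i d) else 0 := by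
  obtain ⟨N, s⟩ := p
  by_cases h : ∃ i d, q = (N + e i, s + dl d)
  · obtain ⟨i, d, rfl⟩ := h
    rw [stepProb_hit]
    simp only [q_iff, ite_and]
    simp
  · push Not at h
    rw [stepProb_miss n (N, s) q h]
    symm
    apply Finset.sum_eq_zero; intro i _
    apply Finset.sum_eq_zero; intro d _
    rw [if_neg (h i d)]

/-- Transition operator on nonnegative functions. -/
noncomputable def PE (n : ℕ) (g : (Fin 3 → ℕ) × ℤ → ℝ≥0∞) (p : (Fin 3 → ℕ) × ℤ) : ℝ≥0∞ :=
  ∑ i, ∑ d, ENNReal.ofReal (pr n p.1 i d) * g (p.1 + e i, p.2 + dl d)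

lemma tsum_stepProb (n : ℕ) (g : (Fin 3 → ℕ) × ℤ → ℝ≥0∞) (p : (Fin 3 → ℕ) × ℤ) :
    ∑' q, stepProb n p q * g q = PE n g p := by
  simp only [stepProb_eq, Finset.sum_mul]
  rw [Summable.tsum_finsetSum (fun _ _ => ENNReal.summable)]
  unfold PE
  apply Finset.sum_congr rfl; intro i _
  rw [Summable.tsum_finsetSum (fun _ _ => ENNReal.summable)]
  apply Finset.sum_congr rfl; intro d _
  rw [tsum_eq_single (p.1 + e i, p.2 + dl d)]
  · simp
  · intro q hq; simp [hq]

lemma markov_lintegral (n : ℕ) {Ω : Type*} [MeasurableSpace Ω] (μ : Measure Ω)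
    (NS : ℕ → Ω → (Fin 3 → ℕ) × ℤ) (h : IsGreedyProcess n μ NS) (t : ℕ) (ht : t < 3 * n)
    (g : (Fin 3 → ℕ) × ℤ → ℝ≥0∞) :
    ∫⁻ ω, g (NS (t+1) ω) ∂μ = ∫⁻ ω, PE n g (NS t ω) ∂μ := by
  obtain ⟨hP, hM, h0, hstep⟩ := h
  let H : Ω → (Fin (t+1) → (Fin 3 → ℕ) × ℤ) := fun ω u => NS u ω
  have hH : Measurable H := measurable_pi_lambda _ (fun u => hM u)
  let K : Ω → (Fin (t+1) → (Fin 3 → ℕ) × ℤ) × ((Fin 3 → ℕ) × ℤ) := fun ω => (H ω, NS (t+1) ω)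
  have hK : Measurable K := hH.prodMk (hM _)
  have e1 : ∫⁻ ω, g (NS (t+1) ω) ∂μ = ∫⁻ x, g x.2 ∂(μ.map K) := by
    rw [lintegral_map (measurable_of_countable _) hK]
  have e2 : ∫⁻ ω, PE n g (NS t ω) ∂μ = ∫⁻ x, PE n g (x (Fin.last t)) ∂(μ.map H) := by
    rw [lintegral_map (measurable_of_countable _) hH]
    simp [H]
  rw [e1, e2, lintegral_countable', lintegral_countable', ENNReal.tsum_prod']
  congr 1; ext x
  rw [← tsum_stepProb, ← ENNReal.tsum_mul_right]
  congr 1; ext q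
  rw [Measure.map_apply hK (measurableSet_singleton _), Measure.map_apply hH (measurableSet_singleton _)]
  let f : ℕ → (Fin 3 → ℕ) × ℤ := fun u => if hu : u < t + 1 then x ⟨u, hu⟩ else q
  have := hstep t ht f
  have f1 : f (t+1) = q := by simp [f]
  have f2 : f t = x (Fin.last t) := by simp [f, Fin.last]
  have hset : {ω | ∀ u ≤ t, NS u ω = f u} = H ⁻¹' {x} := by
    ext ω
    simp only [Set.mem_ofPred_eq, Set.mem_preimage, Set.mem_singleton_iff, H]
    constructor
    · intro hh; ext1 u
      have := hh u (by omega)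
      rw [this]; simp only [f]; rw [dif_pos u.2]
    · rintro rfl u hu
      simp only [f]; rw [dif_pos (Nat.lt_succ_of_le hu)]
  have hset' : {ω | ∀ u ≤ t + 1, NS u ω = f u} = K ⁻¹' {(x, q)} := by
    have : {ω | ∀ u ≤ t + 1, NS u ω = f u} = {ω | ∀ u ≤ t, NS u ω = f u} ∩ {ω | NS (t+1) ω = q} := by
      ext ω
      simp only [Set.mem_ofPred_eq, Set.mem_inter_iff]
      constructor
      · intro hh; exact ⟨fun u hu => hh u (by omega), by rw [hh _ le_rfl, f1]⟩
      · rintro ⟨h1, h2⟩ u hu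
        rcases Nat.lt_or_ge u (t+1) with h | h
        · exact h1 u (by omega)
        · obtain rfl : u = t + 1 := by omega
          rw [h2, f1]
    rw [this, hset]
    ext ω
    simp [K]
  rw [hset, hset', f1, f2] at this
  rw [this]; ring

/-- Real transition operator. -/
noncomputable def PR (n : ℕ) (g : (Fin 3 → ℕ) × ℤ → ℝ) (p : (Fin 3 → ℕ) × ℤ) : ℝ :=
  ∑ i, ∑ d, pr n p.1 i d * g (p.1 + e i, p.2 + dl d)

lemma PE_ofReal (n : ℕ) (g : (Fin 3 → ℕ) × ℤ → ℝ) (hg : ∀ p, 0 ≤ g p) (p : (Fin 3 → ℕ) × ℤ) :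
    PE n (fun p => ENNReal.ofReal (g p)) p = ENNReal.ofReal (PR n g p) := by
  unfold PE PR
  rw [ENNReal.ofReal_sum_of_nonneg]
  · apply Finset.sum_congr rfl; intro i _
    rw [ENNReal.ofReal_sum_of_nonneg]
    · apply Finset.sum_congr rfl; intro d _
      rw [ENNReal.ofReal_mul (pr_nonneg _ _ _ _)]
    · intro d _; exact mul_nonneg (pr_nonneg _ _ _ _) (hg _)
  · intro i _
    apply Finset.sum_nonneg
    intro d _; exact mul_nonneg (pr_nonneg _ _ _ _) (hg _)

lemma PR_nonneg (n : ℕ) (g : (Fin 3 → ℕ) × ℤ → ℝ) (hg : ∀ p, 0 ≤ g p) (p : (Fin 3 → ℕ) × ℤ) :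
    0 ≤ PR n g p := 
  Finset.sum_nonneg fun i _ => Finset.sum_nonneg fun d _ => mul_nonneg (pr_nonneg _ _ _ _) (hg _)

lemma start_ae (n : ℕ) {Ω : Type*} [MeasurableSpace Ω] (μ : Measure Ω)
    (NS : ℕ → Ω → (Fin 3 → ℕ) × ℤ) (h : IsGreedyProcess n μ NS) :
    ∀ᵐ ω ∂μ, NS 0 ω = (fun _ => 0, 0) := by
  obtain ⟨hP, hM, h0, hstep⟩ := h
  rw [← prob_compl_eq_zero_iff] at h0
  · exact h0
  · exact hM 0 (measurableSet_singleton _)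

lemma proc_integrable (n : ℕ) {Ω : Type*} [MeasurableSpace Ω] (μ : Measure Ω)
    (NS : ℕ → Ω → (Fin 3 → ℕ) × ℤ) (h : IsGreedyProcess n μ NS) (t : ℕ) (ht : t ≤ 3 * n) :
    ∀ g : (Fin 3 → ℕ) × ℤ → ℝ, Integrable (fun ω => g (NS t ω)) μ := by
  have := h.1
  induction t with
  | zero =>
    intro g
    refine (integrable_const (g (fun _ => 0, 0))).congr ?_
    filter_upwards [start_ae n μ NS h] with ω hω
    rw [hω]
  | succ t ih =>
    intro g
    refine ⟨((measurable_of_countable g).comp (h.2.1 _)).aestronglyMeasurable, ?_⟩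
    have h1 := markov_lintegral n μ NS h t (by omega) (fun p => ENNReal.ofReal |g p|)
    simp only [PE_ofReal n (fun p => |g p|) (fun p => abs_nonneg _)] at h1
    have h2 := (ih (by omega) (PR n fun p => |g p|)).2
    rw [hasFiniteIntegral_iff_norm] at h2 ⊢
    simp only [Real.norm_eq_abs] at h2 ⊢
    rw [h1]
    refine lt_of_le_of_lt (lintegral_mono fun ω => ?_) h2
    exact ENNReal.ofReal_le_ofReal (le_abs_self _)

lemma markov_integral_nn (n : ℕ) {Ω : Type*} [MeasurableSpace Ω] (μ : Measure Ω)
    (NS : ℕ → Ω → (Fin 3 → ℕ) × ℤ) (h : IsGreedyProcess n μ NS) (t : ℕ) (ht : t < 3 * n)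
    (g : (Fin 3 → ℕ) × ℤ → ℝ) (hg : ∀ p, 0 ≤ g p) :
    ∫ ω, g (NS (t+1) ω) ∂μ = ∫ ω, PR n g (NS t ω) ∂μ := by
  rw [integral_eq_lintegral_of_nonneg_ae (ae_of_all _ fun ω => hg _)
    (proc_integrable n μ NS h (t+1) ht g).1,
    integral_eq_lintegral_of_nonneg_ae (ae_of_all _ fun ω => PR_nonneg n g hg _)
    (proc_integrable n μ NS h t ht.le (PR n g)).1,
    markov_lintegral n μ NS h t ht (fun p => ENNReal.ofReal (g p))]
  simp only [PE_ofReal n g hg]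

lemma markov_integral (n : ℕ) {Ω : Type*} [MeasurableSpace Ω] (μ : Measure Ω)
    (NS : ℕ → Ω → (Fin 3 → ℕ) × ℤ) (h : IsGreedyProcess n μ NS) (t : ℕ) (ht : t < 3 * n)
    (g : (Fin 3 → ℕ) × ℤ → ℝ) :
    ∫ ω, g (NS (t+1) ω) ∂μ = ∫ ω, PR n g (NS t ω) ∂μ := by
  have h1 := markov_integral_nn n μ NS h t ht (fun p => max (g p) 0) (fun p => le_max_right _ _)
  have h2 := markov_integral_nn n μ NS h t ht (fun p => max (-g p) 0) (fun p => le_max_right _ _)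
  have hd : ∀ p, g p = max (g p) 0 - max (-g p) 0 := by
    intro p
    rcases le_total 0 (g p) with h | h <;> simp [h]
  have hd2 : ∀ p, PR n g p = PR n (fun p => max (g p) 0) p - PR n (fun p => max (-g p) 0) p := by
    intro p
    unfold PR
    rw [← Finset.sum_sub_distrib]
    apply Finset.sum_congr rfl; intro i _
    rw [← Finset.sum_sub_distrib]
    apply Finset.sum_congr rfl; intro d _
    rw [← mul_sub, ← hd]
  calc ∫ ω, g (NS (t+1) ω) ∂μ = ∫ ω, (max (g (NS (t+1) ω)) 0 - max (-g (NS (t+1) ω)) 0) ∂μ := by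
        congr 1; ext ω; exact hd _
    _ = _ := by
      rw [integral_sub (proc_integrable n μ NS h (t+1) ht (fun p => max (g p) 0))
        (proc_integrable n μ NS h (t+1) ht (fun p => max (-g p) 0)), h1, h2,
        ← integral_sub (proc_integrable n μ NS h t ht.le _) (proc_integrable n μ NS h t ht.le _)]
      congr 1; ext ω; exact (hd2 _).symm

lemma integral_iter (n : ℕ) {Ω : Type*} [MeasurableSpace Ω] (μ : Measure Ω)
    (NS : ℕ → Ω → (Fin 3 → ℕ) × ℤ) (h : IsGreedyProcess n μ NS) (t : ℕ) (ht : t ≤ 3 * n) :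
    ∀ (g : (Fin 3 → ℕ) × ℤ → ℝ),
    ∫ ω, g (NS t ω) ∂μ = (PR n)^[t] g (fun _ => 0, 0) := by
  have := h.1
  induction t with
  | zero =>
    intro g
    have : ∫ ω, g (NS 0 ω) ∂μ = ∫ ω, g (fun _ => 0, 0) ∂μ := by
      apply integral_congr_ae
      filter_upwards [start_ae n μ NS h] with ω hω
      rw [hω]
    rw [this]; simp
  | succ t ih =>
    intro g
    rw [markov_integral n μ NS h t (by omega), ih (by omega), Function.iterate_succ_apply]


/-- Expected remaining score. -/
noncomputable def mm (n : ℕ) : ℕ → (Fin 3 → ℕ) → ℝ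
  | 0, _ => 0
  | k+1, N => ∑ i, ∑ d, pr n N i d * ((dl d : ℝ) + mm n k (N + e i))

/-- Second moment of the remaining score. -/
noncomputable def ww (n : ℕ) : ℕ → (Fin 3 → ℕ) → ℝ
  | 0, _ => 0
  | k+1, N => ∑ i, ∑ d, pr n N i d *
      ((dl d : ℝ)^2 + 2 * (dl d : ℝ) * mm n k (N + e i) + ww n k (N + e i))

/-- Admissible states with `k` rounds to go. -/
def good (n k : ℕ) (N : Fin 3 → ℕ) : Prop := (∀ i, N i ≤ n) ∧ N 0 + N 1 + N 2 + k = 3 * n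

lemma add_e_apply (N : Fin 3 → ℕ) (i j : Fin 3) : (N + e i) j = N j + if j = i then 1 else 0 := rfl

lemma sum3 (N : Fin 3 → ℕ) (c : Fin 3) : N 0 + N 1 + N 2 = N c + N (c+1) + N (c+2) := by
  fin_cases c
  · simp
  · change N 0 + N 1 + N 2 = N 1 + N 2 + N 0
    ring
  · change N 0 + N 1 + N 2 = N 2 + N 0 + N 1
    ring

lemma good_next {n k : ℕ} {N : Fin 3 → ℕ} (h : good n (k+1) N) {i : Fin 3} (hi : N i < n) :
    good n k (N + e i) := by
  refine ⟨fun j => ?_, ?_⟩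
  · rw [add_e_apply]
    split_ifs with hj
    · subst hj; omega
    · have := h.1 j; omega
  · have h2 := h.2
    rw [sum3 _ i] at h2 ⊢
    have h1 : i + 1 ≠ i := by clear * -; revert i; decide
    have h1' : i + 2 ≠ i := by clear * -; revert i; decide
    simp only [add_e_apply, h1, h1', if_true, if_false]
    omega

lemma fin3_cases (c j : Fin 3) : j = c ∨ j = c + 1 ∨ j = c + 2 := by
  revert c j; decide

lemma sum_fin3 (c : Fin 3) (g : Fin 3 → ℝ) : ∑ i, g i = g c + g (c+1) + g (c+2) := by
  rw [Fin.sum_univ_three]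
  fin_cases c
  · simp
  · change g 0 + g 1 + g 2 = g 1 + g 2 + g 0
    ring
  · change g 0 + g 1 + g 2 = g 2 + g 0 + g 1
    ring

lemma stepA {n : ℕ} {N : Fin 3 → ℕ} (h : ∀ i, N i < n) (g : Fin 3 → Fin 3 → ℝ) :
    ∑ i, ∑ d, pr n N i d * g i d = 1/9 * ∑ i, ∑ d, g i d := by
  have : (Finset.univ.filter fun i => N i = n) = ∅ := by
    ext i; simp [(h i).ne]
  simp only [pr, this, Finset.card_empty, if_true, Finset.mul_sum]

lemma stepB {n : ℕ} {N : Fin 3 → ℕ} {c : Fin 3} (hc : N c = n) (h1 : N (c+1) < n) (h2 : N (c+2) < n)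
    (g : Fin 3 → Fin 3 → ℝ) :
    ∑ i, ∑ d, pr n N i d * g i d =
      2/9 * g (c+1) 2 + 1/9 * g (c+1) 0 + 4/9 * g (c+2) 1 + 2/9 * g (c+2) 2 := by
  have hs : (Finset.univ.filter fun i => N i = n) = {c} := by
    ext i
    rcases fin3_cases c i with rfl | rfl | rfl
    · simp [hc]
    · simp [h1.ne]
    · simp only [Finset.mem_filter, Finset.mem_univ, h2.ne, Finset.mem_singleton, true_and, false_iff]
      clear * -; revert c; decide
  have hp : ∀ i d, pr n N i d = (if i = c+1 ∧ d = 2 then 2/9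
       else if i = c+1 ∧ d = 0 then 1/9
       else if i = c+2 ∧ d = 1 then 4/9
       else if i = c+2 ∧ d = 2 then 2/9
       else 0) := by
    intro i d
    simp only [pr, hs, Finset.card_singleton, one_ne_zero, if_true, if_false]
    rw [sum_fin3 c, if_pos hc, if_neg h1.ne, if_neg h2.ne]
    simp
  have a1 : c ≠ c + 1 := by clear * -; revert c; decide
  have a2 : c ≠ c + 2 := by clear * -; revert c; decide
  have a3 : c + 1 ≠ c + 2 := by clear * -; revert c; decide
  rw [sum_fin3 c]
  simp only [hp, Fin.sum_univ_three, a1, a2, a3, a3.symm]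
  simp
  ring

lemma stepC {n : ℕ} {N : Fin 3 → ℕ} {c : Fin 3} (hc : N c < n) (h1 : N (c+1) = n) (h2 : N (c+2) = n)
    (g : Fin 3 → Fin 3 → ℝ) :
    ∑ i, ∑ d, pr n N i d * g i d = g c 2 := by
  have hs : (Finset.univ.filter fun i => N i = n) = {c+1, c+2} := by
    ext i
    rcases fin3_cases c i with rfl | rfl | rfl
    · simp only [Finset.mem_filter, Finset.mem_univ, hc.ne, Finset.mem_singleton, true_and, false_iff,
        Finset.mem_insert]
      clear * -; revert i; decide
    · simp [h1]
    · simp [h2]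
  have a3 : c + 1 ≠ c + 2 := by clear * -; revert c; decide
  have hp : ∀ i d, pr n N i d = if N i < n ∧ d = 2 then 1 else 0 := by
    intro i d
    simp only [pr, hs, Finset.card_pair a3]
    simp
  rw [sum_fin3 c]
  simp only [hp, Fin.sum_univ_three, hc, h1, h2]
  simp

lemma trich {n k : ℕ} {N : Fin 3 → ℕ} (h : good n (k+1) N) :
    (∀ i, N i < n) ∨ (∃ c, N c = n ∧ N (c+1) < n ∧ N (c+2) < n) ∨
      (∃ c, N c < n ∧ N (c+1) = n ∧ N (c+2) = n) := by
  obtain ⟨h1, h2⟩ := h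
  have a0 := h1 0
  have a1 := h1 1
  have a2 := h1 2
  rcases a0.lt_or_eq with b0 | b0 <;> rcases a1.lt_or_eq with b1 | b1 <;>
    rcases a2.lt_or_eq with b2 | b2
  · left; intro i; fin_cases i <;> assumption
  · right; left; exact ⟨2, b2, b0, b1⟩
  · right; left; exact ⟨1, b1, b2, b0⟩
  · right; right; exact ⟨0, b0, b1, b2⟩
  · right; left; exact ⟨0, b0, b1, b2⟩
  · right; right; exact ⟨1, b1, b2, b0⟩
  · right; right; exact ⟨2, b2, b0, b1⟩
  · omega

lemma pr_sum {n k : ℕ} {N : Fin 3 → ℕ} (h : good n (k+1) N) : ∑ i, ∑ d, pr n N i d = 1 := by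
  have e1 : ∑ i, ∑ d, pr n N i d = ∑ i, ∑ d, pr n N i d * (fun _ _ => (1:ℝ)) i d := by simp
  rw [e1]
  rcases trich h with h | ⟨c, h0, h1, h2⟩ | ⟨c, h0, h1, h2⟩
  · rw [stepA h]; simp; norm_num
  · rw [stepB h0 h1 h2]; norm_num
  · rw [stepC h0 h1 h2]

lemma pr_zero {n k : ℕ} {N : Fin 3 → ℕ} (h : good n (k+1) N) {i : Fin 3} (hi : ¬ N i < n) (d : Fin 3) :
    pr n N i d = 0 := by
  have e1 : pr n N i d = ∑ i', ∑ d', pr n N i' d' * (fun i' d' => if i' = i ∧ d' = d then (1:ℝ) else 0) i' d' := by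
    simp only [ite_and]; simp
  rw [e1]
  rcases trich h with h | ⟨c, h0, h1, h2⟩ | ⟨c, h0, h1, h2⟩
  · exact absurd (h i) hi
  · rw [stepB h0 h1 h2]
    have a1 : c + 1 ≠ i := by rintro rfl; exact hi h1
    have a2 : c + 2 ≠ i := by rintro rfl; exact hi h2
    simp [a1, a2]
  · rw [stepC h0 h1 h2]
    have a1 : c ≠ i := by rintro rfl; exact hi h0
    simp [a1]

lemma pr_congr {n k : ℕ} {N : Fin 3 → ℕ} (h : good n (k+1) N) (g g' : Fin 3 → Fin 3 → ℝ)
    (hg : ∀ i d, N i < n → g i d = g' i d) :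
    ∑ i, ∑ d, pr n N i d * g i d = ∑ i, ∑ d, pr n N i d * g' i d := by
  apply Finset.sum_congr rfl; intro i _
  apply Finset.sum_congr rfl; intro d _
  by_cases hi : N i < n
  · rw [hg i d hi]
  · rw [pr_zero h hi]; simp

lemma pr_const {n k : ℕ} {N : Fin 3 → ℕ} (h : good n (k+1) N) (g : Fin 3 → Fin 3 → ℝ) (a : ℝ) :
    a + ∑ i, ∑ d, pr n N i d * g i d = ∑ i, ∑ d, pr n N i d * (a + g i d) := by
  simp only [mul_add, Finset.sum_add_distrib, ← Finset.sum_mul, pr_sum h, one_mul]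

lemma iter_one {n : ℕ} (k : ℕ) : ∀ (N : Fin 3 → ℕ) (s : ℤ), good n k N →
    (PR n)^[k] (fun p => (p.2 : ℝ)) (N, s) = s + mm n k N := by
  induction k with
  | zero => intro N s _; simp [mm]
  | succ k ih =>
    intro N s h
    rw [Function.iterate_succ_apply']
    simp only [PR, mm]
    rw [pr_const h]
    apply pr_congr h
    intro i d hi
    rw [ih _ _ (good_next h hi)]
    push_cast; ring

lemma iter_two {n : ℕ} (k : ℕ) : ∀ (N : Fin 3 → ℕ) (s : ℤ), good n k N →
    (PR n)^[k] (fun p => (p.2 : ℝ)^2) (N, s) = (s:ℝ)^2 + (2 * s * mm n k N + ww n k N) := by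
  induction k with
  | zero => intro N s _; simp [mm, ww]
  | succ k ih =>
    intro N s h
    rw [Function.iterate_succ_apply']
    simp only [PR, mm, ww, Finset.mul_sum, ← Finset.sum_add_distrib]
    have : ∀ i d, 2 * (s:ℝ) * (pr n N i d * (dl d + mm n k (N + e i))) +
        pr n N i d * ((dl d : ℝ)^2 + 2 * (dl d : ℝ) * mm n k (N + e i) + ww n k (N + e i)) =
        pr n N i d * ((2 * (s:ℝ) * (dl d + mm n k (N + e i))) +
         ((dl d : ℝ)^2 + 2 * (dl d : ℝ) * mm n k (N + e i) + ww n k (N + e i))) := by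
      intro i d; ring
    simp only [this]
    rw [pr_const h]
    apply pr_congr h
    intro i d hi
    rw [ih _ _ (good_next h hi)]
    push_cast; ring

/-- `E (X - θ)^2` where `X` is the remaining score. -/
noncomputable def zz (n k : ℕ) (N : Fin 3 → ℕ) (θ : ℝ) : ℝ := ww n k N - 2 * θ * mm n k N + θ^2

lemma zz_succ {n k : ℕ} {N : Fin 3 → ℕ} (h : good n (k+1) N) (θ : ℝ) :
    zz n (k+1) N θ = ∑ i, ∑ d, pr n N i d * zz n k (N + e i) (θ - dl d) := by
  have : zz n (k+1) N θ = θ^2 + ∑ i, ∑ d, pr n N i d *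
      (((dl d : ℝ)^2 + 2 * (dl d : ℝ) * mm n k (N + e i) + ww n k (N + e i))
        - 2 * θ * ((dl d : ℝ) + mm n k (N + e i))) := by
    simp only [zz, mm, ww, mul_sub, Finset.sum_sub_distrib, Finset.mul_sum]
    have : ∀ i d, 2 * θ * (pr n N i d * (dl d + mm n k (N + e i))) =
      pr n N i d * (2 * θ * (dl d + mm n k (N + e i))) := by intros; ring
    simp only [this]
    ring
  rw [this, pr_const h]
  apply pr_congr h
  intro i d hi
  simp only [zz]; ring

lemma zz_nonneg {n : ℕ} (k : ℕ) : ∀ (N : Fin 3 → ℕ) (θ : ℝ), good n k N → 0 ≤ zz n k N θ := by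
  induction k with
  | zero => intro N θ _; simp [zz, mm, ww]; positivity
  | succ k ih =>
    intro N θ h
    rw [zz_succ h, pr_congr h _ (fun i d => max (zz n k (N + e i) (θ - dl d)) 0)]
    · exact Finset.sum_nonneg fun i _ => Finset.sum_nonneg fun d _ =>
        mul_nonneg (pr_nonneg _ _ _ _) (le_max_right _ _)
    · intro i d hi
      rw [max_eq_left (ih _ _ (good_next h hi))]

lemma phase3 {n : ℕ} (k : ℕ) : ∀ (N : Fin 3 → ℕ) (c : Fin 3) (θ : ℝ), good n k N → N (c+1) = n → N (c+2) = n →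
    zz n k N θ = (k - θ)^2 := by
  induction k with
  | zero => intro N c θ h h1 h2; simp [zz, mm, ww]
  | succ k ih =>
    intro N c θ h h1 h2
    have hc : N c < n := by
      have h2' := h.2
      rw [sum3 N c] at h2'
      omega
    rw [zz_succ h, stepC hc h1 h2 (fun i d => zz n k (N + e i) (θ - dl d)), ih _ c _ (good_next h hc)]
    · simp [dl]; ring
    · rw [add_e_apply, h1, if_neg]; · rfl
      · clear * -; revert c; decide
    · rw [add_e_apply, h2, if_neg]; · rfl
      · clear * -; revert c; decide

lemma phase2 {n : ℕ} (k : ℕ) : ∀ (N : Fin 3 → ℕ) (c : Fin 3) (θ₁ θ₂ : ℝ), good n k N → N c = n →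
    zz n k N (θ₁ + max θ₂ 0) ≤ 2 * (((n:ℝ) - N (c+1)) - θ₁)^2 +
      2 * (((n:ℝ) - N (c+2)) - 2 * ((n:ℝ) - N (c+1)) - θ₂)^2 + 16/3 * k := by
  have key1 : ∀ y θ₁ θ₂ : ℝ, 0 ≤ y → (y - (θ₁ + max θ₂ 0))^2 ≤ 2 * (0 - θ₁)^2 + 2 * (y - θ₂)^2 := by
    intro y θ₁ θ₂ hy
    have : |y - max θ₂ 0| ≤ |y - θ₂| := by
      rcases le_total θ₂ 0 with h | h
      · rw [max_eq_right h, sub_zero, abs_of_nonneg hy]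
        exact le_trans (by linarith) (le_abs_self _)
      · rw [max_eq_left h]
    have := sq_le_sq.mpr this
    nlinarith [sq_nonneg (-θ₁ - (y - max θ₂ 0))]
  have key2 : ∀ x θ₁ θ₂ : ℝ, 0 ≤ x →
      (x - (θ₁ + max θ₂ 0))^2 ≤ 2 * (x - θ₁)^2 + 2 * (0 - 2 * x - θ₂)^2 := by
    intro x θ₁ θ₂ hx
    have : |max θ₂ 0| ≤ |0 - 2 * x - θ₂| := by
      rcases le_total θ₂ 0 with h | h
      · rw [max_eq_right h, abs_zero]; positivity
      · rw [max_eq_left h, abs_of_nonneg h, abs_sub_comm]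
        exact le_trans (by linarith) (le_abs_self _)
    have := sq_le_sq.mpr this
    nlinarith [sq_nonneg ((x - θ₁) + max θ₂ 0)]
  intro N c θ₁ θ₂ h hc
  induction k generalizing N θ₁ θ₂ with
  | zero =>
    have h2' := h.2
    rw [sum3 N c] at h2'
    have l1 := h.1 (c+1)
    have l2 := h.1 (c+2)
    have e1 : N (c+1) = n := by omega
    have e2 : N (c+2) = n := by omega
    have := key1 0 θ₁ θ₂ le_rfl
    simp only [zz, mm, ww, e1, e2]
    norm_num at this ⊢
    linarith
  | succ k ih =>
    have h2' := h.2
    rw [sum3 N c] at h2'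
    have l1 := h.1 (c+1)
    have l2 := h.1 (c+2)
    have s1 : c + 1 + 1 = c + 2 := by clear * -; revert c; decide
    have s2 : c + 1 + 2 = c := by clear * -; revert c; decide
    have s3 : c + 2 + 1 = c := by clear * -; revert c; decide
    have s4 : c + 2 + 2 = c + 1 := by clear * -; revert c; decide
    have a1 : c ≠ c + 1 := by clear * -; revert c; decide
    have a2 : c ≠ c + 2 := by clear * -; revert c; decide
    have a3 : c + 1 ≠ c + 2 := by clear * -; revert c; decide
    rcases l1.lt_or_eq with l1 | l1
    · rcases l2.lt_or_eq with l2 | l2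
      · rw [zz_succ h, stepB hc l1 l2 (fun i d => zz n k (N + e i) (θ₁ + max θ₂ 0 - dl d))]
        have g1 := good_next h l1
        have g2 := good_next h l2
        have c1 : (N + e (c+1)) c = n := by rw [add_e_apply, hc, if_neg a1]; rfl
        have c2 : (N + e (c+2)) c = n := by rw [add_e_apply, hc, if_neg a2]; rfl
        have b1 := ih (N + e (c+1)) (θ₁ - 1) θ₂ g1 c1
        have b2 := ih (N + e (c+1)) (θ₁ + 1) θ₂ g1 c1
        have b3 := ih (N + e (c+2)) θ₁ θ₂ g2 c2
        have b4 := ih (N + e (c+2)) (θ₁ - 1) θ₂ g2 c2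
        simp only [add_e_apply, a3, a3.symm, if_true, if_false] at b1 b2 b3 b4
        have d0 : ((dl 0 : ℤ) : ℝ) = -1 := by simp [dl]
        have d1 : ((dl 1 : ℤ) : ℝ) = 0 := by simp [dl]
        have d2 : ((dl 2 : ℤ) : ℝ) = 1 := by simp [dl]
        simp only [d0, d1, d2]
        push_cast at b1 b2 b3 b4 ⊢
        rw [show θ₁ - 1 + max θ₂ 0 = θ₁ + max θ₂ 0 - 1 by ring] at b1 b4
        rw [show θ₁ + 1 + max θ₂ 0 = θ₁ + max θ₂ 0 - -1 by ring] at b2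
        rw [show θ₁ + max θ₂ 0 = θ₁ + max θ₂ 0 - 0 by ring] at b3
        nlinarith [b1, b2, b3, b4]
      · rw [phase3 (k+1) N (c+1) _ h (by rw [s1, l2]) (by rw [s2, hc])]
        have hx : (N (c+1) : ℝ) + k + 1 = n := by
          have : N (c+1) + k + 1 = n := by omega
          exact_mod_cast this
        have := key2 (k+1) θ₁ θ₂ (by positivity)
        rw [l2]
        push_cast
        rw [show (n:ℝ) - N (c+1) = k + 1 by linarith]
        rw [sub_self]
        have hk : (0:ℝ) ≤ k := by positivity
        linarith
    · rw [phase3 (k+1) N (c+2) _ h (by rw [s3, hc]) (by rw [s4, l1])]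
      have hx : (N (c+2) : ℝ) + k + 1 = n := by
        have : N (c+2) + k + 1 = n := by omega
        exact_mod_cast this
      have := key1 (k+1) θ₁ θ₂ (by positivity)
      rw [l1]
      push_cast
      rw [show (n:ℝ) - N (c+2) = k + 1 by linarith]
      rw [sub_self]
      have hk : (0:ℝ) ≤ k := by positivity
      simp only [mul_zero, sub_zero]
      linarith

/-- The limiting functional. -/
noncomputable def fD (N : Fin 3 → ℕ) : ℝ :=
  max ((N 0 : ℝ) - N 1) (max ((N 1 : ℝ) - N 2) ((N 2 : ℝ) - N 0))

/-- Quadratic form. -/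
noncomputable def GD (N : Fin 3 → ℕ) : ℝ :=
  ((N 0 : ℝ) - N 1)^2 + ((N 1 : ℝ) - N 2)^2 + ((N 2 : ℝ) - N 0)^2

/-- Free walk operator. -/
noncomputable def Q (g : (Fin 3 → ℕ) → ℝ) (N : Fin 3 → ℕ) : ℝ :=
  (g (N + e 0) + g (N + e 1) + g (N + e 2)) / 3

lemma fD_bdry {n : ℕ} {N : Fin 3 → ℕ} (c : Fin 3) (h : ∀ i, N i ≤ n) (hc : N c = n) :
    fD N = ((n:ℝ) - N (c+1)) + max (((n:ℝ) - N (c+2)) - 2 * ((n:ℝ) - N (c+1))) 0 := by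
  have h1 : (N (c+1) : ℝ) ≤ n := by exact_mod_cast h (c+1)
  have h2 : (N (c+2) : ℝ) ≤ n := by exact_mod_cast h (c+2)
  have key : fD N = max ((N c : ℝ) - N (c+1)) (max ((N (c+1) : ℝ) - N (c+2)) ((N (c+2) : ℝ) - N c)) := by
    fin_cases c
    · simp [fD]
    · change fD N = max ((N 1 : ℝ) - N 2) (max ((N 2 : ℝ) - N 0) ((N 0 : ℝ) - N 1))
      unfold fD
      rw [max_comm, max_assoc]
    · change fD N = max ((N 2 : ℝ) - N 0) (max ((N 0 : ℝ) - N 1) ((N 1 : ℝ) - N 2))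
      unfold fD
      rw [← max_assoc, max_comm]
  rw [key, hc]
  rcases le_total (((n:ℝ) - N (c+2)) - 2 * ((n:ℝ) - N (c+1))) 0 with hh | hh
  · rw [max_eq_right hh, max_eq_left]
    · ring
    · apply max_le <;> linarith
  · rw [max_eq_left hh, max_eq_right, max_eq_left]
    · ring
    · linarith
    · rw [max_eq_left (by linarith)]; linarith

lemma GD_bdry {n k : ℕ} {N : Fin 3 → ℕ} (c : Fin 3) (h : good n k N) (hc : N c = n) :
    (k:ℝ)^2 / 2 ≤ GD N := by
  have key : GD N = ((N c : ℝ) - N (c+1))^2 + ((N (c+1) : ℝ) - N (c+2))^2 + ((N (c+2) : ℝ) - N c)^2 := by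
    unfold GD
    fin_cases c
    · simp
    · change _ = ((N 1 : ℝ) - N 2)^2 + ((N 2 : ℝ) - N 0)^2 + ((N 0 : ℝ) - N 1)^2
      ring
    · change _ = ((N 2 : ℝ) - N 0)^2 + ((N 0 : ℝ) - N 1)^2 + ((N 1 : ℝ) - N 2)^2
      ring
  have h2 := h.2
  rw [sum3 N c, hc] at h2
  have hk : (k:ℝ) = (n - N (c+1)) + (n - N (c+2)) := by
    have : (n:ℝ) + N (c+1) + N (c+2) + k = 3 * n := by exact_mod_cast h2
    linarith
  rw [key, hc, hk]
  nlinarith [sq_nonneg ((N (c+1) : ℝ) - N (c+2))]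

lemma fD_nonneg (N : Fin 3 → ℕ) : 0 ≤ fD N := by
  unfold fD
  by_contra h
  push Not at h
  rw [max_lt_iff, max_lt_iff] at h
  linarith [h.1, h.2.1, h.2.2]

/-- free second moment around `θ` -/
noncomputable def yy (k : ℕ) (N : Fin 3 → ℕ) (θ : ℝ) : ℝ :=
  (Q^[k] fun N => (fD N)^2) N - 2 * θ * (Q^[k] fD) N + θ^2

lemma yy_succ (k : ℕ) (N : Fin 3 → ℕ) (θ : ℝ) :
    yy (k+1) N θ = (yy k (N + e 0) θ + yy k (N + e 1) θ + yy k (N + e 2) θ) / 3 := by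
  simp only [yy, Function.iterate_succ_apply']
  simp only [Q]
  ring

lemma yy_nonneg (k : ℕ) : ∀ (N : Fin 3 → ℕ) (θ : ℝ), 0 ≤ yy k N θ := by
  induction k with
  | zero => intro N θ; simp only [yy, Function.iterate_zero, id]; nlinarith [sq_nonneg (fD N - θ)]
  | succ k ih =>
    intro N θ
    rw [yy_succ]
    linarith [ih (N + e 0) θ, ih (N + e 1) θ, ih (N + e 2) θ]

lemma yy_le (k : ℕ) (a b c : ℝ) : ∀ (N : Fin 3 → ℕ), yy k N (max a (max b c)) ≤
    ((N 0 : ℝ) - N 1 - a)^2 + ((N 1 : ℝ) - N 2 - b)^2 + ((N 2 : ℝ) - N 0 - c)^2 + 2 * k := by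
  induction k with
  | zero =>
    intro N
    simp only [yy, Function.iterate_zero, id]
    have h1 : |fD N - max a (max b c)| ≤
        max |(N 0 : ℝ) - N 1 - a| (max |(N 1 : ℝ) - N 2 - b| |(N 2 : ℝ) - N 0 - c|) := by
      unfold fD
      refine (abs_max_sub_max_le_max _ _ _ _).trans ?_
      exact max_le_max le_rfl (abs_max_sub_max_le_max _ _ _ _)
    have h2 : (fD N - max a (max b c))^2 ≤
      ((N 0 : ℝ) - N 1 - a)^2 + ((N 1 : ℝ) - N 2 - b)^2 + ((N 2 : ℝ) - N 0 - c)^2 := by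
      rw [← sq_abs]
      rw [le_max_iff, le_max_iff] at h1
      rcases h1 with h1 | h1 | h1 <;>
      · have := pow_le_pow_left₀ (abs_nonneg _) h1 2
        rw [sq_abs ((N _ : ℝ) - _ - _)] at this
        nlinarith [sq_nonneg ((N 0 : ℝ) - N 1 - a), sq_nonneg ((N 1 : ℝ) - N 2 - b), sq_nonneg ((N 2 : ℝ) - N 0 - c)]
    push_cast
    nlinarith
  | succ k ih =>
    intro N
    rw [yy_succ]
    have h0 := ih (N + e 0)
    have h1 := ih (N + e 1)
    have h2 := ih (N + e 2)
    simp [e] at h0 h1 h2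
    push_cast
    nlinarith

lemma compare {n : ℕ} (A : ℕ → (Fin 3 → ℕ) → ℝ) (α β : ℝ) (hα : 0 ≤ α)
    (hA : ∀ k N, good n (k+1) N → (∀ i, N i < n) →
      A (k+1) N = (A k (N + e 0) + A k (N + e 1) + A k (N + e 2)) / 3)
    (hb : ∀ k N c, good n k N → N c = n → |A k N| ≤ α * k^2 + β) :
    ∀ k N, good n k N → |A k N| ≤ 2 * α * (GD N + 2 * k) + β := by
  intro k
  induction k with
  | zero =>
    intro N h
    have hc : N 0 = n := by
      have := h.1 0; have := h.1 1; have := h.1 2; have := h.2; omega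
    have := hb 0 N 0 h hc
    have hG : 0 ≤ GD N := by unfold GD; positivity
    have : 0 ≤ α * GD N := by positivity
    push_cast at *
    linarith
  | succ k ih =>
    intro N h
    by_cases hi : ∀ i, N i < n
    · rw [hA k N h hi]
      have h0 := abs_le.mp (ih _ (good_next h (hi 0)))
      have h1 := abs_le.mp (ih _ (good_next h (hi 1)))
      have h2 := abs_le.mp (ih _ (good_next h (hi 2)))
      have hG : GD (N + e 0) + GD (N + e 1) + GD (N + e 2) = 3 * GD N + 6 := by
        simp [GD, e]; ring
      have hG2 : α * GD (N + e 0) + α * GD (N + e 1) + α * GD (N + e 2) = 3 * (α * GD N) + 6 * α := by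
        linear_combination α * hG
      push_cast
      rw [abs_le]
      constructor <;> linarith [h0.1, h0.2, h1.1, h1.2, h2.1, h2.2]
    · push Not at hi
      obtain ⟨c, hc⟩ := hi
      have hc : N c = n := le_antisymm (h.1 c) hc
      have h1 := hb (k+1) N c h hc
      have h2 := GD_bdry c h hc
      have : α * (((k+1:ℕ):ℝ)^2/2) ≤ α * GD N := mul_le_mul_of_nonneg_left h2 hα
      have : 0 ≤ α * ((k+1 : ℕ) : ℝ) := by positivity
      linarith

lemma bdry_bounds {n k : ℕ} {N : Fin 3 → ℕ} (c : Fin 3) (h : good n k N) (hc : N c = n) :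
    |mm n k N - (Q^[k] fD) N| ≤ 4 * √k ∧
    |ww n k N - (Q^[k] fun N => (fD N)^2) N - 2/3 * k| ≤ 16 * (k * √k) := by
  have z1 := phase2 k N c ((n:ℝ) - N (c+1)) (((n:ℝ) - N (c+2)) - 2 * ((n:ℝ) - N (c+1))) h hc
  rw [← fD_bdry c h.1 hc] at z1
  have z2 : zz n k N (fD N) ≤ 16/3 * k := by nlinarith
  have y1 := yy_le k ((N 0 : ℝ) - N 1) ((N 1 : ℝ) - N 2) ((N 2 : ℝ) - N 0) N
  rw [show max ((N 0 : ℝ) - N 1) (max ((N 1 : ℝ) - N 2) ((N 2 : ℝ) - N 0)) = fD N from rfl] at y1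
  have y2 : yy k N (fD N) ≤ 2 * k := by nlinarith
  have z3 := zz_nonneg k N (mm n k N) h
  have y3 := yy_nonneg k N ((Q^[k] fD) N)
  have z0 := zz_nonneg k N (fD N) h
  have y0 := yy_nonneg k N (fD N)
  set m := mm n k N
  set w := ww n k N
  set a := (Q^[k] fD) N
  set b := (Q^[k] fun N => (fD N)^2) N
  set F := fD N
  have hF0 : 0 ≤ F := fD_nonneg N
  have hFk : F ≤ k := by
    have h2 := h.2
    rw [sum3 N c, hc] at h2
    have hk : (k:ℝ) = (n - N (c+1)) + (n - N (c+2)) := by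
      have : (n:ℝ) + N (c+1) + N (c+2) + k = 3 * n := by exact_mod_cast h2
      linarith
    have h1 : (N (c+1) : ℝ) ≤ n := by exact_mod_cast h.1 (c+1)
    have h2 : (N (c+2) : ℝ) ≤ n := by exact_mod_cast h.1 (c+2)
    show fD N ≤ k
    rw [fD_bdry c h.1 hc, hk]
    have : max (((n:ℝ) - N (c+2)) - 2 * ((n:ℝ) - N (c+1))) 0 ≤ n - N (c+2) := by
      apply max_le <;> linarith
    linarith
  simp only [zz, yy] at z2 y2 z3 y3 z0 y0
  change 0 ≤ w - 2 * m * m + m^2 at z3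
  change 0 ≤ b - 2 * a * a + a^2 at y3
  change w - 2 * F * m + F^2 ≤ _ at z2
  change b - 2 * F * a + F^2 ≤ _ at y2
  change 0 ≤ w - 2 * F * m + F^2 at z0
  change 0 ≤ b - 2 * F * a + F^2 at y0
  have hk0 : (0:ℝ) ≤ k := by positivity
  have hs : √(k:ℝ)^2 = k := Real.sq_sqrt hk0
  have hs0 := Real.sqrt_nonneg (k:ℝ)
  have m1 : |m - F| ≤ 2.4 * √k := by
    apply abs_le_of_sq_le_sq _ (by positivity)
    rw [mul_pow, hs]; nlinarith
  have m2 : |a - F| ≤ 1.6 * √k := by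
    apply abs_le_of_sq_le_sq _ (by positivity)
    rw [mul_pow, hs]; nlinarith
  have m3 : |m - a| ≤ 4 * √k := by
    have : m - a = (m - F) - (a - F) := by ring
    rw [this]
    refine (abs_sub _ _).trans ?_
    linarith
  refine ⟨m3, ?_⟩
  have hkk : (k:ℝ) ≤ k * √k := by
    rcases Nat.eq_zero_or_pos k with h0 | h0
    · simp [h0]
    · have : 1 ≤ √(k:ℝ) := by
        rw [Real.one_le_sqrt]; exact_mod_cast h0
      nlinarith
  have hFm : |F * (m - a)| ≤ 4 * (k * √k) := by
    rw [abs_mul, abs_of_nonneg hF0]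
    calc F * |m - a| ≤ k * (4 * √k) := mul_le_mul hFk m3 (abs_nonneg _) hk0
      _ = _ := by ring
  rw [abs_le] at hFm ⊢
  constructor <;> linarith [hFm.1, hFm.2]

lemma good_zero (n : ℕ) : good n (3*n) (fun _ => 0) := ⟨fun _ => Nat.zero_le _, by simp⟩

lemma final_bounds (n : ℕ) (δ : ℝ) (hδ : 0 < δ) (hn : δ^4 * n = 1) :
    |mm n (3*n) (fun _ => 0) - (Q^[3*n] fD) (fun _ => 0)| * δ^2 ≤ 56 * δ ∧
    |ww n (3*n) (fun _ => 0) - (Q^[3*n] fun N => (fD N)^2) (fun _ => 0) - 2 * n| * δ^4 ≤ 400 * δ := by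
  have hsq : ∀ k : ℕ, √(k:ℝ) ≤ δ^3 * k^2 + 2/δ := by
    intro k
    have hk0 : (0:ℝ) ≤ k := by positivity
    have hs : √(k:ℝ)^2 = k := Real.sq_sqrt hk0
    have h1 : √(k:ℝ) ≤ δ * k + 1/δ := by
      rw [← sub_nonneg]
      have : δ * k + 1/δ - √(k:ℝ) = ((δ * √(k:ℝ) - 1/2)^2 + 3/4) / δ := by
        field_simp
        ring_nf
        rw [hs]
      rw [this]; positivity
    have h2 : δ * (k:ℝ) ≤ δ^3 * k^2 + 1/δ := by
      rw [← sub_nonneg]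
      have : δ^3 * (k:ℝ)^2 + 1/δ - δ * k = ((δ^2 * k - 1/2)^2 + 3/4) / δ := by
        field_simp
        ring
      rw [this]; positivity
    have : 2 / δ = 1/δ + 1/δ := by ring
    linarith
  have hksq : ∀ k : ℕ, k * √(k:ℝ) ≤ 2 * δ * k^2 + 1/δ^3 := by
    intro k
    have hk0 : (0:ℝ) ≤ k := by positivity
    have hs : √(k:ℝ)^2 = k := Real.sq_sqrt hk0
    have h1 : √(k:ℝ) ≤ δ * k + 1/δ := by
      rw [← sub_nonneg]
      have : δ * k + 1/δ - √(k:ℝ) = ((δ * √(k:ℝ) - 1/2)^2 + 3/4) / δ := by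
        field_simp
        ring_nf
        rw [hs]
      rw [this]; positivity
    have h2 : 1/δ * (k:ℝ) ≤ δ * k^2 + 1/δ^3 := by
      rw [← sub_nonneg]
      have : δ * (k:ℝ)^2 + 1/δ^3 - 1/δ * k = ((δ^2 * k - 1/2)^2 + 3/4) / δ^3 := by
        field_simp
        ring
      rw [this]; positivity
    have := mul_le_mul_of_nonneg_left h1 hk0
    nlinarith
  have sA : ∀ {N : Fin 3 → ℕ} (h : ∀ i, N i < n) (g : Fin 3 → ℝ),
      ∑ i, ∑ d, pr n N i d * ((dl d : ℝ) + g i) = (g 0 + g 1 + g 2) / 3 := by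
    intro N h g
    rw [stepA h]
    simp [Fin.sum_univ_three, dl]
    ring
  have sA2 : ∀ {N : Fin 3 → ℕ} (h : ∀ i, N i < n) (g g' : Fin 3 → ℝ),
      ∑ i, ∑ d, pr n N i d * ((dl d : ℝ)^2 + 2 * (dl d : ℝ) * g i + g' i) = (g' 0 + g' 1 + g' 2) / 3 + 2/3 := by
    intro N h g g'
    rw [stepA h]
    simp [Fin.sum_univ_three, dl]
    ring
  have A1 := compare (n := n) (fun k N => mm n k N - (Q^[k] fD) N) (4 * δ^3) (8/δ) (by positivity)
    (by
      intro k N h hi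
      simp only [mm, Function.iterate_succ_apply']
      rw [sA hi]
      simp only [Q]
      ring)
    (by
      intro k N c h hc
      refine (bdry_bounds c h hc).1.trans ?_
      have := hsq k
      have h8 : 8 / δ = 4 * (2 / δ) := by ring
      rw [h8]
      linarith) (3*n) (fun _ => 0) (good_zero n)
  have A2 := compare (n := n) (fun k N => ww n k N - (Q^[k] fun N => (fD N)^2) N - 2/3 * k) (32 * δ) (16/δ^3) (by positivity)
    (by
      intro k N h hi
      simp only [ww, Function.iterate_succ_apply']
      rw [sA2 hi]
      simp only [Q]
      push_cast
      ring)
    (by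
      intro k N c h hc
      refine (bdry_bounds c h hc).2.trans ?_
      have := hksq k
      have h8 : 16 / δ^3 = 16 * (1 / δ^3) := by ring
      rw [h8]
      linarith) (3*n) (fun _ => 0) (good_zero n)
  have G0 : GD (fun _ => 0) = 0 := by simp [GD]
  simp only [G0] at A1 A2
  push_cast at A1 A2
  constructor
  · have := mul_le_mul_of_nonneg_right A1 (sq_nonneg δ)
    have e1 : (2 * (4 * δ^3) * (0 + 2 * (3 * (n:ℝ))) + 8/δ) * δ^2 = 48 * (δ^4 * n) * δ + 8 * δ := by
      field_simp
      ring
    rw [e1, hn] at this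
    linarith
  · rw [show 2/3 * (3 * (n:ℝ)) = 2 * n by ring] at A2
    have := mul_le_mul_of_nonneg_right A2 (pow_nonneg hδ.le 4)
    have e1 : (2 * (32 * δ) * (0 + 2 * (3 * (n:ℝ))) + 16/δ^3) * δ^4 = 384 * (δ^4 * n) * δ + 16 * δ := by
      field_simp
      ring
    rw [e1, hn] at this
    linarith


/-- Planar steps. -/
noncomputable def vv : Fin 3 → ℂ := ![⟨1, -1/√3⟩, ⟨-1, -1/√3⟩, ⟨0, 2/√3⟩]

/-- Law of the planar free walk after `k` steps. -/
noncomputable def lam : ℕ → Measure ℂ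
  | 0 => Measure.dirac 0
  | k+1 => (3⁻¹ : ℝ≥0∞) • ((lam k).map (fun z => z + vv 0) + ((lam k).map (fun z => z + vv 1)
      + (lam k).map (fun z => z + vv 2)))

lemma meas_add (a : ℂ) : Measurable (fun z : ℂ => z + a) := by fun_prop

lemma lam_prob (k : ℕ) : IsProbabilityMeasure (lam k) := by
  induction k with
  | zero => unfold lam; infer_instance
  | succ k ih =>
    have h := fun a => Measure.isProbabilityMeasure_map (μ := lam k) (meas_add a).aemeasurable
    have h0 := h (vv 0)
    have h1 := h (vv 1)
    have h2 := h (vv 2)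
    constructor
    simp only [lam, Measure.smul_apply, Measure.add_apply, measure_univ, smul_eq_mul]
    rw [show (1 + (1 + 1) : ℝ≥0∞) = 3 by norm_num]
    exact ENNReal.inv_mul_cancel (by norm_num) (by norm_num)

instance (k : ℕ) : IsProbabilityMeasure (lam k) := lam_prob k

lemma lam_integrable {E : Type*} [NormedAddCommGroup E] (k : ℕ) :
    ∀ (g : ℂ → E), Continuous g → Integrable g (lam k) := by
  induction k with
  | zero =>
    intro g hg
    unfold lam
    exact integrable_dirac (by simp)
  | succ k ih =>
    intro g hg
    have h : ∀ a, Integrable g ((lam k).map (fun z => z + a)) := by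
      intro a
      have : Integrable (fun z => g (z + a)) (lam k) := ih _ (by fun_prop)
      rw [integrable_map_measure hg.aestronglyMeasurable (meas_add a).aemeasurable]
      exact this
    unfold lam
    apply Integrable.smul_measure
    · exact (h _).add_measure ((h _).add_measure (h _))
    · simp

lemma lam_integral {E : Type*} [NormedAddCommGroup E] [NormedSpace ℝ E] (k : ℕ)
    (g : ℂ → E) (hg : Continuous g) :
    ∫ z, g z ∂(lam (k+1)) = (3⁻¹:ℝ) • (∫ z, g (z + vv 0) ∂(lam k) + (∫ z, g (z + vv 1) ∂(lam k) +
      ∫ z, g (z + vv 2) ∂(lam k))) := by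
  have h : ∀ a, Integrable g ((lam k).map (fun z => z + a)) := by
    intro a
    have : Integrable (fun z => g (z + a)) (lam k) := lam_integrable k _ (by fun_prop)
    rw [integrable_map_measure hg.aestronglyMeasurable (meas_add a).aemeasurable]
    exact this
  have h2 : ∀ a, ∫ z, g z ∂((lam k).map (fun z => z + a)) = ∫ z, g (z + a) ∂(lam k) := fun a =>
    integral_map (meas_add a).aemeasurable hg.aestronglyMeasurable
  conv_lhs => unfold lam
  rw [integral_smul_measure, integral_add_measure (h _) ((h _).add_measure (h _)),
    integral_add_measure (h _) (h _), h2, h2, h2]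
  simp

/-- Planar position. -/
noncomputable def Wc (N : Fin 3 → ℕ) : ℂ := N 0 * vv 0 + N 1 * vv 1 + N 2 * vv 2

lemma Wc_add (N : Fin 3 → ℕ) (i : Fin 3) : Wc (N + e i) = Wc N + vv i := by
  unfold Wc
  fin_cases i <;> simp [e] <;> ring

lemma Q_iter (k : ℕ) (g : ℂ → ℝ) (hg : Continuous g) : ∀ N,
    (Q^[k] fun N => g (Wc N)) N = ∫ z, g (Wc N + z) ∂(lam k) := by
  induction k with
  | zero => intro N; simp [lam]
  | succ k ih =>
    intro N
    rw [Function.iterate_succ_apply', lam_integral k (fun z => g (Wc N + z)) (by fun_prop)]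
    simp only [Q]
    rw [ih, ih, ih]
    simp only [Wc_add, smul_eq_mul]
    have : ∀ i z, Wc N + vv i + z = Wc N + (z + vv i) := by intros; ring
    simp only [this]
    ring

/-- Planar version of the functional. -/
noncomputable def fC (z : ℂ) : ℝ := max z.re (max (-z.re/2 - √3/2 * z.im) (-z.re/2 + √3/2 * z.im))

lemma fC_cont : Continuous fC := by unfold fC; fun_prop

lemma fD_eq (N : Fin 3 → ℕ) : fD N = fC (Wc N) := by
  have h3 : √3 * √3 = (3:ℝ) := Real.mul_self_sqrt (by norm_num)
  have h0 : √3 ≠ (0:ℝ) := by positivity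
  have hre : (Wc N).re = N 0 - N 1 := by simp [Wc, vv]; ring
  have him : √3 * (Wc N).im = 2 * N 2 - N 0 - N 1 := by
    simp [Wc, vv]; field_simp; ring
  unfold fD fC
  have e1 : -(Wc N).re/2 - √3/2 * (Wc N).im = (N 1 : ℝ) - N 2 := by
    rw [show √3/2 * (Wc N).im = (√3 * (Wc N).im) / 2 by ring, him, hre]; ring
  have e2 : -(Wc N).re/2 + √3/2 * (Wc N).im = (N 2 : ℝ) - N 0 := by
    rw [show √3/2 * (Wc N).im = (√3 * (Wc N).im) / 2 by ring, him, hre]; ring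
  rw [e1, e2, hre]

lemma fC_smul (r : ℝ) (hr : 0 ≤ r) (z : ℂ) : fC (r • z) = r * fC z := by
  unfold fC
  rw [mul_max_of_nonneg _ _ hr, mul_max_of_nonneg _ _ hr]
  congr 1
  · simp
  · congr 1 <;> simp <;> ring

lemma fC_nonneg (z : ℂ) : 0 ≤ fC z := by
  unfold fC
  by_contra h
  push Not at h
  rw [max_lt_iff, max_lt_iff] at h
  linarith [h.1, h.2.1, h.2.2]

lemma norm_sq_eq (z : ℂ) : ‖z‖^2 = z.re^2 + z.im^2 := by
  rw [← Complex.normSq_eq_norm_sq, Complex.normSq_apply]; ring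

lemma fC_sq_le (z : ℂ) : fC z ^ 2 ≤ ‖z‖^2 := by
  have h3 : √3 ^ 2 = (3:ℝ) := Real.sq_sqrt (by norm_num)
  rw [norm_sq_eq]
  have h := le_refl (fC z)
  unfold fC at h
  conv_lhs at h => change fC z
  rw [le_max_iff, le_max_iff] at h
  have h0 := fC_nonneg z
  rcases h with h | h | h
  · nlinarith [sq_nonneg z.im]
  · have := pow_le_pow_left₀ h0 h 2
    nlinarith [sq_nonneg (√3/2 * z.re - z.im / 2)]
  · have := pow_le_pow_left₀ h0 h 2
    nlinarith [sq_nonneg (√3/2 * z.re + z.im / 2)]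

lemma fC_le (z : ℂ) : fC z ≤ 1 + ‖z‖^2 := by
  nlinarith [fC_sq_le z, sq_nonneg (fC z - 1), fC_nonneg z]

lemma lam_sq (k : ℕ) : ∫ z, ‖z‖^2 ∂(lam k) = 4/3 * k := by
  induction k with
  | zero => simp [lam]
  | succ k ih =>
    rw [lam_integral k _ (by fun_prop), ← integral_add, ← integral_add]
    · have h3 : √3 ^ 2 = (3:ℝ) := Real.sq_sqrt (by norm_num)
      have h0 : √3 ≠ (0:ℝ) := by positivity
      have : ∀ z : ℂ, ‖z + vv 0‖^2 + (‖z + vv 1‖^2 + ‖z + vv 2‖^2) = 3 * ‖z‖^2 + 4 := by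
        intro z
        simp only [norm_sq_eq]
        simp [vv]
        field_simp
        rw [h3]
        ring_nf
        rw [h3]
        ring
      simp only [this]
      rw [integral_add (lam_integrable k _ (by fun_prop)) (integrable_const _), integral_const_mul, ih]
      simp
      ring
    all_goals first
      | exact lam_integrable k _ (by fun_prop)
      | exact (lam_integrable k _ (by fun_prop)).add (lam_integrable k _ (by fun_prop))

/-- Scaled law. -/
noncomputable def nu (n : ℕ) : Measure ℂ := (lam (3*n)).map (fun z => (√(n:ℝ))⁻¹ • z)

lemma meas_smul (r : ℝ) : Measurable (fun z : ℂ => r • z) := by fun_prop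

instance (n : ℕ) : IsProbabilityMeasure (nu n) :=
  Measure.isProbabilityMeasure_map (meas_smul _).aemeasurable

lemma nu_integral {E : Type*} [NormedAddCommGroup E] [NormedSpace ℝ E] (n : ℕ) (g : ℂ → E) (hg : Continuous g) :
    ∫ z, g z ∂(nu n) = ∫ z, g ((√(n:ℝ))⁻¹ • z) ∂(lam (3*n)) :=
  integral_map (meas_smul _).aemeasurable hg.aestronglyMeasurable

lemma nu_integrable (n : ℕ) (g : ℂ → ℝ) (hg : Continuous g) : Integrable g (nu n) := by
  have : Integrable (fun z => g ((√(n:ℝ))⁻¹ • z)) (lam (3*n)) := lam_integrable _ _ (by fun_prop)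
  unfold nu
  rw [integrable_map_measure hg.aestronglyMeasurable (meas_smul _).aemeasurable]
  exact this

lemma nu_f (n : ℕ) : ∫ z, fC z ∂(nu n) = (√(n:ℝ))⁻¹ * (Q^[3*n] fD) (fun _ => 0) := by
  have hfc := fC_cont
  rw [nu_integral n _ hfc, show fD = fun N => fC (Wc N) from funext fD_eq, Q_iter _ _ hfc,
    ← integral_const_mul]
  congr 1; ext z
  rw [fC_smul _ (by positivity)]
  simp [Wc]

lemma nu_f2 (n : ℕ) : ∫ z, fC z ^ 2 ∂(nu n) = (n:ℝ)⁻¹ * (Q^[3*n] fun N => (fD N)^2) (fun _ => 0) := by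
  have hfc := fC_cont
  rw [nu_integral n _ (by fun_prop), show (fun N => (fD N)^2) = fun N => (fun z => fC z ^2) (Wc N) from
    funext fun N => by rw [fD_eq], Q_iter (3*n) (fun z => fC z ^ 2) (by fun_prop),
    ← integral_const_mul]
  congr 1; ext z
  rw [fC_smul _ (by positivity), mul_pow, inv_pow, Real.sq_sqrt (by positivity)]
  simp [Wc]

lemma nu_sq (n : ℕ) (hn : 1 ≤ n) : ∫ z, ‖z‖^2 ∂(nu n) = 4 := by
  have hn' : (n:ℝ) ≠ 0 := by positivity
  rw [nu_integral n _ (by fun_prop)]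
  simp only [norm_smul, mul_pow, norm_inv, inv_pow, Real.norm_eq_abs, sq_abs]
  rw [integral_const_mul, lam_sq, Real.sq_sqrt (by positivity)]
  push_cast
  field_simp

/-- Characteristic function of one step. -/
noncomputable def phi (t : ℂ) : ℂ := (Complex.exp ((inner ℝ (vv 0) t : ℝ) * Complex.I) +
  Complex.exp ((inner ℝ (vv 1) t : ℝ) * Complex.I) + Complex.exp ((inner ℝ (vv 2) t : ℝ) * Complex.I)) / 3

lemma charFun_lam (k : ℕ) (t : ℂ) : charFun (lam k) t = phi t ^ k := by
  induction k with
  | zero => simp [charFun_apply, lam]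
  | succ k ih =>
    rw [charFun_apply, lam_integral k _ (by fun_prop), pow_succ, ← ih, charFun_apply]
    simp only [inner_add_left, Complex.ofReal_add, add_mul, Complex.exp_add]
    rw [integral_mul_const, integral_mul_const, integral_mul_const]
    unfold phi
    rw [Complex.real_smul]
    push_cast
    ring

lemma charFun_nu (n : ℕ) (t : ℂ) : charFun (nu n) t = (phi ((√(n:ℝ))⁻¹ • t) ^ n) ^ 3 := by
  unfold nu
  rw [charFun_map_smul, charFun_lam, ← pow_mul, mul_comm]

lemma littleO_aux (u v : ℕ → ℂ) (c : ℂ) (h : Tendsto u atTop (𝓝 0)) :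
    (fun n => u n * c * v n) =o[atTop] v := by
  have h' : Tendsto (fun n => u n * c) atTop (𝓝 0) := by
    have := h.mul_const c
    rwa [zero_mul] at this
  have h4 := ((Asymptotics.isLittleO_one_iff ℂ).mpr h').mul_isBigO (Asymptotics.isBigO_refl v atTop)
  exact h4.congr_right (fun n => one_mul _)

lemma exp_taylor (a : ℝ) : (fun n : ℕ => Complex.exp ((((√(n:ℝ))⁻¹ * a : ℝ) : ℂ) * Complex.I) -
    (1 + (((√(n:ℝ))⁻¹ * a : ℝ) : ℂ) * Complex.I - ((a^2/2 : ℝ) : ℂ) / n)) =o[atTop] fun n : ℕ => 1 / (n:ℂ) := by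
  have hlim : Tendsto (fun n : ℕ => (√(n:ℝ))⁻¹) atTop (𝓝 0) :=
    tendsto_inv_atTop_zero.comp (Real.tendsto_sqrt_atTop.comp tendsto_natCast_atTop_atTop)
  have ht : Tendsto (fun n : ℕ => (((√(n:ℝ))⁻¹ * a : ℝ) : ℂ) * Complex.I) atTop (𝓝 0) := by
    have h1 : Tendsto (fun n : ℕ => (√(n:ℝ))⁻¹ * a) atTop (𝓝 0) := by
      simpa using hlim.mul_const a
    have h2 := ((Complex.continuous_ofReal.tendsto 0).comp h1).mul_const Complex.I
    simpa using h2
  have hO := (Complex.exp_sub_sum_range_isBigO_pow 3).comp_tendsto ht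
  have e1 : (fun n : ℕ => Complex.exp ((((√(n:ℝ))⁻¹ * a : ℝ) : ℂ) * Complex.I) -
    (1 + (((√(n:ℝ))⁻¹ * a : ℝ) : ℂ) * Complex.I - ((a^2/2 : ℝ) : ℂ) / n)) =
    ((fun x : ℂ => Complex.exp x - ∑ i ∈ Finset.range 3, x ^ i / (i.factorial : ℂ)) ∘
      fun n : ℕ => (((√(n:ℝ))⁻¹ * a : ℝ) : ℂ) * Complex.I) := by
    ext n
    have hn : ((((√(n:ℝ))⁻¹ * a : ℝ) : ℂ) * Complex.I)^2 = - ((a^2 : ℝ) : ℂ) / n := by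
      rw [mul_pow, Complex.I_sq, ← Complex.ofReal_pow, mul_pow, inv_pow, Real.sq_sqrt (by positivity)]
      push_cast; ring
    simp only [Function.comp, Finset.sum_range_succ, Finset.sum_range_zero, hn]
    simp [Nat.factorial]
    ring
  rw [e1]
  refine hO.trans_isLittleO ?_
  have e2 : ((fun x : ℂ => x ^ 3) ∘ fun n : ℕ => (((√(n:ℝ))⁻¹ * a : ℝ) : ℂ) * Complex.I) =
      fun n : ℕ => ((((√(n:ℝ))⁻¹ * a : ℝ) : ℂ) * Complex.I) * (-((a^2 : ℝ) : ℂ)) * (1 / (n:ℂ)) := by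
    ext n
    have hn : ((((√(n:ℝ))⁻¹ * a : ℝ) : ℂ) * Complex.I)^2 = - ((a^2 : ℝ) : ℂ) / n := by
      rw [mul_pow, Complex.I_sq, ← Complex.ofReal_pow, mul_pow, inv_pow, Real.sq_sqrt (by positivity)]
      push_cast; ring
    simp only [Function.comp]
    rw [pow_succ, hn]; ring
  rw [e2]
  exact littleO_aux _ _ _ ht

lemma tendsto_charFun_nu (t : ℂ) :
    Tendsto (fun n => charFun (nu n) t) atTop (𝓝 (Complex.exp (-(‖t‖^2 : ℝ)))) := by
  have h : Tendsto (fun n : ℕ => phi ((√(n:ℝ))⁻¹ • t) ^ n) atTop (𝓝 (Complex.exp (-(‖t‖^2/3 : ℝ)))) := by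
    apply Complex.tendsto_pow_exp_of_isLittleO_sub_add_div
    have h0 := exp_taylor (inner ℝ (vv 0) t)
    have h1 := exp_taylor (inner ℝ (vv 1) t)
    have h2 := exp_taylor (inner ℝ (vv 2) t)
    refine (((h0.add h1).add h2).const_mul_left (1/3)).congr_left ?_
    intro n
    have s0 : inner ℝ (vv 0) t + inner ℝ (vv 1) t + inner ℝ (vv 2) t = 0 := by
      simp [Complex.inner, vv]; ring
    have s2 : (inner ℝ (vv 0) t)^2 + (inner ℝ (vv 1) t)^2 + (inner ℝ (vv 2) t)^2 = 2 * ‖t‖^2 := by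
      have h3 : √3 ^ 2 = (3:ℝ) := Real.sq_sqrt (by norm_num)
      have h0 : √3 ≠ (0:ℝ) := by positivity
      rw [norm_sq_eq]
      simp [Complex.inner, vv]; field_simp; rw [h3]; ring_nf; rw [h3]; ring
    unfold phi
    simp only [inner_smul_right]
    have s0' : ((inner ℝ (vv 0) t : ℝ) : ℂ) = - (inner ℝ (vv 1) t : ℝ) - (inner ℝ (vv 2) t : ℝ) := by
      rw [← sub_eq_zero]; norm_cast; rw [← s0]; push_cast; ring
    have s2' : (((inner ℝ (vv 0) t : ℝ) : ℂ))^2 = 2 * (‖t‖:ℂ)^2 - ((inner ℝ (vv 1) t : ℝ) : ℂ)^2 - ((inner ℝ (vv 2) t : ℝ) : ℂ)^2 := by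
      norm_cast; linarith
    push_cast
    rw [s2']
    generalize Complex.exp _ = A
    generalize Complex.exp _ = B
    generalize Complex.exp _ = C
    rw [s0']
    ring
  have h2 := h.pow 3
  simp only [charFun_nu]
  convert h2 using 2
  rw [← Complex.exp_nat_mul]
  congr 1
  push_cast
  ring

/-- The Gaussian limit. -/
noncomputable def gam : Measure ℂ :=
  volume.withDensity (fun z => ENNReal.ofReal (Real.exp (-(1/4) * ‖z‖^2) / (4 * π)))

lemma gam_integral {E : Type*} [NormedAddCommGroup E] [NormedSpace ℝ E] (g : ℂ → E) :
    ∫ z, g z ∂gam = ∫ z, (Real.exp (-(1/4) * ‖z‖^2) / (4 * π)) • g z := by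
  unfold gam
  rw [integral_withDensity_eq_integral_toReal_smul (by fun_prop) (by simp)]
  congr 1; ext z
  rw [ENNReal.toReal_ofReal (by positivity)]

lemma gam_dens : ∫ z : ℂ, Real.exp (-(1/4) * ‖z‖^2) / (4 * π) = 1 := by
  rw [integral_div, GaussianFourier.integral_rexp_neg_mul_sq_norm (by norm_num)]
  rw [Complex.finrank_real_complex]
  have : ((2:ℕ):ℝ)/2 = 1 := by norm_num
  rw [this, Real.rpow_one]
  have := Real.pi_pos
  field_simp

instance : IsProbabilityMeasure gam := by
  constructor
  unfold gam
  rw [withDensity_apply _ MeasurableSet.univ, Measure.restrict_univ, ← ofReal_integral_eq_lintegral_ofReal, gam_dens]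
  · simp
  · by_contra h
    have := integral_undef h
    rw [gam_dens] at this
    norm_num at this
  · exact ae_of_all _ fun z => by positivity

lemma charFun_gam (t : ℂ) : charFun gam t = Complex.exp (-(‖t‖^2 : ℝ)) := by
  rw [charFun_apply, gam_integral]
  have h := GaussianFourier.integral_cexp_neg_mul_sq_norm_add (V := ℂ) (b := 1/4) (by norm_num) Complex.I t
  rw [Complex.finrank_real_complex] at h
  have e1 : (((2:ℕ):ℂ)/2) = 1 := by norm_num
  rw [e1, Complex.cpow_one] at h
  have e2 : ∀ z : ℂ, (Real.exp (-(1/4) * ‖z‖^2) / (4 * π)) • Complex.exp ((inner ℝ z t : ℝ) * Complex.I) =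
      (1 / (4 * π : ℂ)) * Complex.exp (-(1/4) * (‖z‖:ℂ)^2 + Complex.I * (inner ℝ t z : ℝ)) := by
    intro z
    rw [Complex.real_smul, Complex.exp_add, real_inner_comm]
    push_cast
    rw [mul_comm Complex.I]
    ring
  simp only [e2]
  rw [integral_const_mul, h, Complex.I_sq]
  have hp : (π : ℂ) ≠ 0 := by exact_mod_cast Real.pi_ne_zero
  rw [← mul_assoc]
  have : 1 / (4 * (π:ℂ)) * (π / (1/4)) = 1 := by field_simp
  rw [this, one_mul]
  congr 1
  push_cast; ring

/-- The scaled law as a probability measure. -/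
noncomputable def nuP (n : ℕ) : ProbabilityMeasure ℂ := ⟨nu n, inferInstance⟩

/-- The Gaussian limit as a probability measure. -/
noncomputable def gamP : ProbabilityMeasure ℂ := ⟨gam, inferInstance⟩

lemma tendsto_nu : Tendsto nuP atTop (𝓝 gamP) := by
  apply ProbabilityMeasure.tendsto_of_tendsto_charFun
  intro t
  have := tendsto_charFun_nu t
  rw [← charFun_gam] at this
  exact this


lemma liminf_bound (h : ℂ → ℝ) (hc : Continuous h) (h0 : ∀ z, 0 ≤ h z) (hi : Integrable h gam)
    (ε : ℝ) (hε : 0 < ε) : ∀ᶠ n in atTop, ∫ z, h z ∂gam - ε < ∫ z, h z ∂(nu n) := by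
  have h1 : Tendsto (fun M : ℕ => ∫ z, min (h z) M ∂gam) atTop (𝓝 (∫ z, h z ∂gam)) := by
    apply tendsto_integral_of_dominated_convergence h
    · intro M; exact (by fun_prop : Continuous fun z => min (h z) (M:ℝ)).aestronglyMeasurable
    · exact hi
    · intro M
      refine ae_of_all _ fun z => ?_
      rw [Real.norm_eq_abs, abs_of_nonneg (le_min (h0 z) (by positivity))]
      exact min_le_left _ _
    · refine ae_of_all _ fun z => ?_
      apply tendsto_const_nhds.congr'
      obtain ⟨M0, hM0⟩ := exists_nat_ge (h z)
      filter_upwards [eventually_ge_atTop M0] with M hM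
      rw [min_eq_left]
      exact hM0.trans (by exact_mod_cast hM)
  obtain ⟨M, hM⟩ := (h1.eventually (lt_mem_nhds (show ∫ z, h z ∂gam - ε < ∫ z, h z ∂gam by linarith))).exists
  let b : BoundedContinuousFunction ℂ ℝ := BoundedContinuousFunction.ofNormedAddCommGroup
    (fun z => min (h z) (M:ℝ)) (by fun_prop) M (by
      intro z
      rw [Real.norm_eq_abs, abs_of_nonneg (le_min (h0 z) (by positivity))]
      exact min_le_right _ _)
  have h2 := (ProbabilityMeasure.tendsto_iff_forall_integral_tendsto.mp tendsto_nu) b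
  have h3 := h2.eventually (lt_mem_nhds (show ∫ z, h z ∂gam - ε < ∫ z, b z ∂gam from hM))
  filter_upwards [h3] with n hn
  refine lt_of_lt_of_le hn ?_
  apply integral_mono
  · exact nu_integrable n _ (by fun_prop)
  · exact nu_integrable n _ hc
  · intro z; exact min_le_left _ _

lemma moment_conv (h H : ℂ → ℝ) (hc : Continuous h) (Hc : Continuous H) (h0 : ∀ z, 0 ≤ h z)
    (hH : ∀ z, h z ≤ H z) (Hi : Integrable H gam) (L : ℝ) (HL : ∫ z, H z ∂gam = L)
    (Hn : ∀ n, 1 ≤ n → ∫ z, H z ∂(nu n) = L) :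
    Tendsto (fun n => ∫ z, h z ∂(nu n)) atTop (𝓝 (∫ z, h z ∂gam)) := by
  have hi : Integrable h gam := Hi.mono' hc.aestronglyMeasurable
    (ae_of_all _ fun z => by rw [Real.norm_eq_abs, abs_of_nonneg (h0 z)]; exact hH z)
  rw [Metric.tendsto_nhds]
  intro ε hε
  filter_upwards [liminf_bound h hc h0 hi ε hε,
    liminf_bound (fun z => H z - h z) (by fun_prop) (fun z => sub_nonneg.mpr (hH z)) (Hi.sub hi) ε hε,
    eventually_ge_atTop 1] with n h1 h2 hn
  rw [integral_sub Hi hi, integral_sub (nu_integrable n _ Hc) (nu_integrable n _ hc), HL, Hn n hn] at h2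
  rw [Real.dist_eq, abs_lt]
  constructor <;> linarith


lemma ang_eq (j : ℕ) (θ : ℝ) : fC ((Real.cos θ : ℂ) + Real.sin θ * Complex.I) ^ j =
    (max (Real.cos θ) (max (Real.cos (θ + 2*π/3)) (Real.cos (θ - 2*π/3)))) ^ j := by
  have hc : Real.cos (2*π/3) = -1/2 := by
    rw [show 2*π/3 = π - π/3 by ring, Real.cos_pi_sub, Real.cos_pi_div_three]; ring
  have hs : Real.sin (2*π/3) = √3/2 := by
    rw [show 2*π/3 = π - π/3 by ring, Real.sin_pi_sub, Real.sin_pi_div_three]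
  rw [Real.cos_add, Real.cos_sub, hc, hs]
  unfold fC
  have h1 : ((Real.cos θ : ℂ) + Real.sin θ * Complex.I).re = Real.cos θ := by
    simp only [Complex.add_re, Complex.ofReal_re, Complex.mul_re, Complex.I_re, Complex.I_im,
      Complex.ofReal_im]; ring
  have h2 : ((Real.cos θ : ℂ) + Real.sin θ * Complex.I).im = Real.sin θ := by
    simp only [Complex.add_im, Complex.ofReal_re, Complex.mul_im, Complex.I_re, Complex.I_im,
      Complex.ofReal_im]; ring
  rw [h1, h2]
  congr 3
  · ring
  · ring

/-- Angular profile. -/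
noncomputable def ang (θ : ℝ) : ℝ :=
  max (Real.cos θ) (max (Real.cos (θ + 2*π/3)) (Real.cos (θ - 2*π/3)))

lemma ang_cont : Continuous ang := by unfold ang; fun_prop

lemma ang_neg (θ : ℝ) : ang (-θ) = ang θ := by
  unfold ang
  rw [Real.cos_neg, max_comm (Real.cos (-θ + _)), ← Real.cos_neg (-θ - _), ← Real.cos_neg (-θ + _)]
  congr 3 <;> ring

lemma third_le (θ : ℝ) (h0 : 0 ≤ θ) (h1 : θ ≤ π) : Real.cos (θ + 2*π/3) ≤ Real.cos (θ - 2*π/3) := by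
  have hs : Real.sin (2*π/3) = √3/2 := by
    rw [show 2*π/3 = π - π/3 by ring, Real.sin_pi_sub, Real.sin_pi_div_three]
  rw [Real.cos_add, Real.cos_sub, hs]
  have := Real.sin_nonneg_of_nonneg_of_le_pi h0 h1
  have : 0 ≤ Real.sin θ * (√3/2) := by positivity
  linarith

lemma ang_left (θ : ℝ) (h0 : 0 ≤ θ) (h1 : θ ≤ π/3) : ang θ = Real.cos θ := by
  have hp := Real.pi_pos
  unfold ang
  rw [max_eq_right (third_le θ h0 (by linarith)), max_eq_left]
  rw [← Real.cos_abs (θ - _)]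
  apply Real.cos_le_cos_of_nonneg_of_le_pi h0
  · rw [abs_le]; constructor <;> linarith
  · rw [le_abs]; right; linarith

lemma ang_right (θ : ℝ) (h0 : π/3 ≤ θ) (h1 : θ ≤ π) : ang θ = Real.cos (θ - 2*π/3) := by
  have hp := Real.pi_pos
  unfold ang
  rw [max_eq_right (third_le θ (by linarith) (by linarith)), max_eq_right]
  rw [← Real.cos_abs (θ - _)]
  apply Real.cos_le_cos_of_nonneg_of_le_pi (abs_nonneg _) h1
  rw [abs_le]; constructor <;> linarith

lemma ang_int (j : ℕ) : ∫ θ in (-π)..π, ang θ ^ j =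
    2 * ((∫ θ in (0:ℝ)..(π/3), Real.cos θ ^ j) + ∫ θ in (-(π/3))..(π/3), Real.cos θ ^ j) := by
  have hp := Real.pi_pos
  have hc := ang_cont
  have hi : ∀ a b, IntervalIntegrable (fun θ => ang θ ^ j) volume a b := fun a b =>
    (by fun_prop : Continuous fun θ => ang θ ^ j).intervalIntegrable a b
  rw [← intervalIntegral.integral_add_adjacent_intervals (hi (-π) 0) (hi 0 π)]
  have h1 : ∫ θ in (-π)..0, ang θ ^ j = ∫ θ in (0:ℝ)..π, ang θ ^ j := by
    have := intervalIntegral.integral_comp_neg (fun θ => ang θ ^ j) (a := 0) (b := π)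
    simp only [ang_neg, neg_zero] at this
    exact this.symm
  rw [h1, ← intervalIntegral.integral_add_adjacent_intervals (hi 0 (π/3)) (hi (π/3) π)]
  have h2 : ∫ θ in (0:ℝ)..(π/3), ang θ ^ j = ∫ θ in (0:ℝ)..(π/3), Real.cos θ ^ j := by
    apply intervalIntegral.integral_congr
    intro θ hθ
    rw [Set.uIcc_of_le (by positivity)] at hθ
    simp only [ang_left θ hθ.1 hθ.2]
  have h3 : ∫ θ in (π/3)..π, ang θ ^ j = ∫ θ in (π/3)..π, Real.cos (θ - 2*π/3) ^ j := by
    apply intervalIntegral.integral_congr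
    intro θ hθ
    rw [Set.uIcc_of_le (by linarith)] at hθ
    simp only [ang_right θ hθ.1 hθ.2]
  rw [h2, h3, intervalIntegral.integral_comp_sub_right (fun θ => Real.cos θ ^ j),
    show π/3 - 2*π/3 = -(π/3) by ring, show π - 2*π/3 = π/3 by ring]
  ring

lemma ang_one : ∫ θ in (-π)..π, ang θ ^ 1 = 3 * √3 := by
  rw [ang_int]
  simp only [pow_one, integral_cos, Real.sin_neg, Real.sin_zero, Real.sin_pi_div_three]
  ring

lemma ang_two : ∫ θ in (-π)..π, ang θ ^ 2 = π + 3 * √3 / 4 := by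
  rw [ang_int, integral_cos_sq, integral_cos_sq]
  simp only [Real.sin_neg, Real.cos_neg, Real.sin_zero, Real.sin_pi_div_three, Real.cos_pi_div_three]
  ring

lemma polar_gam (g : ℂ → ℝ) (j : ℕ) (φ : ℝ → ℝ)
    (hg : ∀ r θ : ℝ, 0 < r → g (r * ((Real.cos θ : ℂ) + Real.sin θ * Complex.I)) = r^j * φ θ) :
    ∫ z, g z ∂gam = (∫ r in Set.Ioi (0:ℝ), r^((j:ℝ)+1) * Real.exp (-(1/4) * r^(2:ℝ))) *
      (∫ θ in (-π)..π, φ θ) / (4*π) := by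
  rw [gam_integral, ← Complex.integral_comp_polarCoord_symm,
    intervalIntegral.integral_of_le (by linarith [Real.pi_pos]),
    show polarCoord.target = Set.Ioi (0:ℝ) ×ˢ Set.Ioo (-π) π from rfl]
  rw [integral_Ioc_eq_integral_Ioo, ← setIntegral_prod_mul, ← integral_div]
  apply setIntegral_congr_fun (measurableSet_Ioi.prod measurableSet_Ioo)
  rintro ⟨r, θ⟩ ⟨hr, -⟩
  have hr : 0 < r := hr
  simp only [Complex.polarCoord_symm_apply, smul_eq_mul]
  have hn : ‖(r:ℂ) * ((Real.cos θ : ℂ) + Real.sin θ * Complex.I)‖^2 = r^2 := by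
    rw [norm_mul, Complex.ofReal_cos, Complex.ofReal_sin, Complex.norm_cos_add_sin_mul_I]
    simp
  rw [hg r θ hr, hn, Real.rpow_add hr, Real.rpow_natCast, Real.rpow_one, Real.rpow_two]
  ring

lemma rad (j : ℕ) : ∫ r in Set.Ioi (0:ℝ), r^((j:ℝ)+1) * Real.exp (-(1/4) * r^(2:ℝ)) =
    (1/4:ℝ)^(-((j:ℝ)+2)/2) * (1/2) * Real.Gamma (((j:ℝ)+2)/2) := by
  rw [integral_rpow_mul_exp_neg_mul_rpow (by norm_num) (by have : (0:ℝ) ≤ j := by positivity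
                                                           linarith) (by norm_num)]
  ring_nf

lemma rad_one : ∫ r in Set.Ioi (0:ℝ), r^(((1:ℕ):ℝ)+1) * Real.exp (-(1/4) * r^(2:ℝ)) = 2 * √π := by
  rw [rad, show (((1:ℕ):ℝ)+2)/2 = 1/2 + 1 by norm_num, Real.Gamma_add_one (by norm_num),
    Real.Gamma_one_half_eq, show -(((1:ℕ):ℝ)+2)/2 = -(3/2) by norm_num,
    show (1/4:ℝ) = 2^(-2:ℝ) by rw [Real.rpow_neg (by norm_num)]; norm_num, ← Real.rpow_mul (by norm_num),
    show (-2:ℝ) * -(3/2) = (3:ℕ) by norm_num, Real.rpow_natCast]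
  ring

lemma rad_two : ∫ r in Set.Ioi (0:ℝ), r^(((2:ℕ):ℝ)+1) * Real.exp (-(1/4) * r^(2:ℝ)) = 8 := by
  rw [rad, show (((2:ℕ):ℝ)+2)/2 = 1 + 1 by norm_num, Real.Gamma_add_one (by norm_num),
    Real.Gamma_one, show -(((2:ℕ):ℝ)+2)/2 = -2 by norm_num,
    Real.rpow_neg (by norm_num), Real.rpow_two]
  norm_num

lemma fC_polar (j : ℕ) (r θ : ℝ) (hr : 0 < r) :
    fC (r * ((Real.cos θ : ℂ) + Real.sin θ * Complex.I)) ^ j = r^j * ang θ ^ j := by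
  rw [← Complex.real_smul, fC_smul r hr.le, mul_pow, ang_eq]
  rfl

lemma gam_f : ∫ z, fC z ∂gam = 3 * √3 / (2 * √π) := by
  have h := polar_gam (fun z => fC z ^ 1) 1 (fun θ => ang θ ^ 1) (fC_polar 1)
  rw [ang_one, rad_one] at h
  simp only [pow_one] at h
  rw [h]
  have : √π ≠ 0 := by have := Real.pi_pos; positivity
  have h2 : √π ^ 2 = π := Real.sq_sqrt Real.pi_pos.le
  have := Real.pi_pos
  field_simp
  rw [h2]
  ring

lemma gam_f2 : ∫ z, fC z ^ 2 ∂gam = 2 + 3 * √3 / (2 * π) := by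
  rw [polar_gam (fun z => fC z ^ 2) 2 (fun θ => ang θ ^ 2) (fC_polar 2), ang_two, rad_two]
  have := Real.pi_pos
  field_simp
  ring

lemma gam_sq : ∫ z, ‖z‖ ^ 2 ∂gam = 4 := by
  rw [polar_gam (fun z => ‖z‖ ^ 2) 2 (fun θ => 1), rad_two]
  · have := Real.pi_pos
    simp
    field_simp
    ring
  · intro r θ hr
    rw [norm_mul, Complex.ofReal_cos, Complex.ofReal_sin, Complex.norm_cos_add_sin_mul_I]
    simp

lemma gam_sq_int : Integrable (fun z : ℂ => ‖z‖^2) gam := by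
  by_contra h
  have := integral_undef h
  rw [gam_sq] at this
  norm_num at this

lemma tendsto_f2 : Tendsto (fun n => ∫ z, fC z ^ 2 ∂(nu n)) atTop (𝓝 (2 + 3 * √3 / (2 * π))) := by
  rw [← gam_f2]
  have hfc := fC_cont
  exact moment_conv (fun z => fC z ^ 2) (fun z => ‖z‖^2) (by fun_prop) (by fun_prop)
    (fun z => by positivity) fC_sq_le gam_sq_int 4 gam_sq nu_sq

lemma tendsto_f : Tendsto (fun n => ∫ z, fC z ∂(nu n)) atTop (𝓝 (3 * √3 / (2 * √π))) := by
  rw [← gam_f]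
  refine moment_conv fC (fun z => 1 + ‖z‖^2) fC_cont (by fun_prop)
    fC_nonneg fC_le ((integrable_const _).add gam_sq_int) 5 ?_ ?_
  · rw [integral_add (integrable_const _) gam_sq_int, gam_sq]; simp; norm_num
  · intro n hn
    rw [integral_add (integrable_const _) (nu_integrable n _ (by fun_prop)), nu_sq n hn]; simp; norm_num

/-- The fourth-root scale. -/
noncomputable def sclq (n : ℕ) : ℝ := (√(√(n:ℝ)))⁻¹

lemma sclq_tendsto : Tendsto sclq atTop (𝓝 0) :=
  tendsto_inv_atTop_zero.comp (Real.tendsto_sqrt_atTop.comp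
    (Real.tendsto_sqrt_atTop.comp tendsto_natCast_atTop_atTop))

lemma sclq_sq (n : ℕ) : sclq n ^ 2 = (√(n:ℝ))⁻¹ := by
  unfold sclq; rw [inv_pow, Real.sq_sqrt (by positivity)]

lemma sclq_four (n : ℕ) : sclq n ^ 4 = (n:ℝ)⁻¹ := by
  rw [show 4 = 2 * 2 by norm_num, pow_mul, sclq_sq, inv_pow, Real.sq_sqrt (by positivity)]

lemma sclq_pos (n : ℕ) (hn : 1 ≤ n) : 0 < sclq n := by
  have : (0:ℝ) < n := by exact_mod_cast hn
  unfold sclq; positivity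

lemma tendsto_mm : Tendsto (fun n : ℕ => (√(n:ℝ))⁻¹ * mm n (3*n) (fun _ => 0)) atTop
    (𝓝 (3 * √3 / (2 * √π))) := by
  have h1 : Tendsto (fun n : ℕ => (√(n:ℝ))⁻¹ * mm n (3*n) (fun _ => 0) - ∫ z, fC z ∂(nu n)) atTop (𝓝 0) := by
    apply squeeze_zero_norm' (a := fun n => 56 * sclq n)
    · filter_upwards [eventually_ge_atTop 1] with n hn
      have hn' : (n:ℝ) ≠ 0 := by positivity
      have := (final_bounds n (sclq n) (sclq_pos n hn) (by rw [sclq_four]; field_simp)).1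
      rw [nu_f, ← mul_sub, norm_mul, ← sclq_sq, Real.norm_of_nonneg (by positivity), mul_comm]
      exact this
    · simpa using sclq_tendsto.const_mul 56
  simpa using h1.add tendsto_f

lemma tendsto_ww : Tendsto (fun n : ℕ => (n:ℝ)⁻¹ * ww n (3*n) (fun _ => 0)) atTop
    (𝓝 (2 + 3 * √3 / (2 * π) + 2)) := by
  have h1 : Tendsto (fun n : ℕ => (n:ℝ)⁻¹ * ww n (3*n) (fun _ => 0) - (∫ z, fC z ^ 2 ∂(nu n) + 2)) atTop (𝓝 0) := by
    apply squeeze_zero_norm' (a := fun n => 400 * sclq n)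
    · filter_upwards [eventually_ge_atTop 1] with n hn
      have hn' : (n:ℝ) ≠ 0 := by positivity
      have := (final_bounds n (sclq n) (sclq_pos n hn) (by rw [sclq_four]; field_simp)).2
      have e1 : ∀ a b : ℝ, (n:ℝ)⁻¹ * a - ((n:ℝ)⁻¹ * b + 2) = (a - b - 2*n) * (n:ℝ)⁻¹ := by
        intro a b; field_simp; ring
      rw [nu_f2, e1, norm_mul, ← sclq_four, Real.norm_of_nonneg (r := sclq n ^ 4) (by positivity)]
      exact this
    · simpa using sclq_tendsto.const_mul 400
  simpa using h1.add (tendsto_f2.add_const 2)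

lemma var_eq (n : ℕ) {Ω : Type*} [MeasurableSpace Ω] (μ : Measure Ω)
    (NS : ℕ → Ω → (Fin 3 → ℕ) × ℤ) (h : IsGreedyProcess n μ NS) :
    variance (fun ω => (((NS (3 * n) ω).2 : ℝ))) μ =
      ww n (3*n) (fun _ => 0) - (mm n (3*n) (fun _ => 0))^2 := by
  haveI := h.1
  have hi1 := proc_integrable n μ NS h (3*n) le_rfl (fun p => (p.2:ℝ))
  have hi2 := proc_integrable n μ NS h (3*n) le_rfl (fun p => (p.2:ℝ)^2)
  have hm : MemLp (fun ω => (((NS (3 * n) ω).2 : ℝ))) 2 μ :=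
    (memLp_two_iff_integrable_sq hi1.aestronglyMeasurable).mpr hi2
  rw [variance_eq_sub hm]
  have e1 := integral_iter n μ NS h (3*n) le_rfl (fun p => (p.2:ℝ))
  have e2 := integral_iter n μ NS h (3*n) le_rfl (fun p => (p.2:ℝ)^2)
  rw [iter_one _ _ _ (good_zero n)] at e1
  rw [iter_two _ _ _ (good_zero n)] at e2
  simp only [Pi.pow_apply]
  rw [e1, e2]
  simp



/-- equation (ymer3): `Var(S_n^gr)/n → 4 − (27 − 6√3)/(4π)`. -/
theorem variance_greedy_score_asymptotics
    (Ω : ℕ → Type*) [∀ n, MeasurableSpace (Ω n)] (μ : ∀ n, Measure (Ω n))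
    (NS : ∀ n, ℕ → Ω n → (Fin 3 → ℕ) × ℤ)
    (hproc : ∀ n, 1 ≤ n → IsGreedyProcess n (μ n) (NS n)) :
    Tendsto (fun n : ℕ =>
        variance (fun ω => (((NS n (3 * n) ω).2 : ℝ))) (μ n) / n)
      atTop (𝓝 (4 - (27 - 6 * Real.sqrt 3) / (4 * π))) := by
  have h := tendsto_ww.sub (tendsto_mm.pow 2)
  have e : 2 + 3 * √3 / (2 * π) + 2 - (3 * √3 / (2 * √π))^2 = 4 - (27 - 6 * Real.sqrt 3) / (4 * π) := by
    have h3 : √3 ^ 2 = (3:ℝ) := Real.sq_sqrt (by norm_num)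
    have h2 : √π ^ 2 = π := Real.sq_sqrt Real.pi_pos.le
    have := Real.pi_pos
    rw [div_pow, mul_pow, mul_pow, h3, h2]
    field_simp
    ring
  rw [e] at h
  refine h.congr' ?_
  filter_upwards [eventually_ge_atTop 1] with n hn
  rw [var_eq n (μ n) (NS n) (hproc n hn), mul_pow, inv_pow, Real.sq_sqrt (by positivity)]
  ring



end RPSGreedy
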